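/- Let (W,S) be a Coxeter system with S = {s_1,…,s_n}, n ≥ 3, such that s_n commutes with s_i for all i ≤ n−2, s_{n−1} commutes with s_i for all i ≤ n−3, s_n s_{n−1} s_n = s_{n−1} s_n s_{n−1}, and s_{n−1} s_{n−2} s_{n−1} = s_{n−2} s_{n−1} s_{n−2}. Then for all k ≥ 2: g(W_n,k) = g(W_{n−1},k) + g(W_{n−1},k−1) + g(W_{n−2},k−2) − g(W_{n−3},k−2), and moreover h(W_n) = 2 h(W_{n−1}) + h(W_{n−2}) − h(W_{n−3}). -/

import Mathlib

/-!
The proof rests on the right action `w · s̲` of generators on involutions (`ws` if `s` and `w`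
commute, `sws` otherwise). The Boolean involutions are exactly the values of words *without repeated
letters* under this action (`BoolInv.boolean_iff`): the lifting property of the Bruhat order
identifies the ideal of such a value with the subsets of its word, and conversely, in a Boolean
ideal, each descent of an element is an atom which is new to the word of the element it leads to.
The lifting property follows from the strong exchange property, proved from the action of `W` on
`W × {±1}` (`BoolInv.strong_exchange`), which passes to standard parabolic subgroups.

The rank of the value of a word without repeated letters is the length of the word
(`BoolInv.rank_inw`). Lengths are under control through the exchange property; the absolute length
is the dimension of the space `(w - 1) V` in the geometric representation `V`.

Write `a = s_n`, `b = s_{n-1}`, `c = s_{n-2}` and `B_i` for the Boolean involutions of `W_i`. A word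
without `a` gives an element of `B_{n-1}`. In a word with `a`, the letters other than `b` commute
with `a`, so unless `b` comes after `a`, the letter `a` moves to the end and the value is `v · a̲`
with `v` in `B_{n-1}`. If `b` comes after `a` but `c` does not come before `b`, the braid relation
of `a` and `b` allows to interchange them. Otherwise all the letters other than `a` and `b` move to
the front and the value is `b u a b` with `u` in `B_{n-2}` but not in `B_{n-3}`. This decomposition
(`BoolInv.Tail.decomp`) is disjoint, because such a `u` does not commute with `b`
(`BoolInv.Tail.not_commute_b`), where the braid relation of `b` and `c` enters. The three parts raise
the rank by `0`, `1` and `2`, and counting gives both recursions (`BoolInv.Tail.count`).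
-/

/-- The length of `g` with respect to a generating set `Gen`:
the minimal length of a word in elements of `Gen` whose product is `g`. -/
noncomputable def glen {G : Type*} [Group G] (Gen : Set G) (g : G) : ℕ :=
  sInf {k : ℕ | ∃ l : List G, (∀ t ∈ l, t ∈ Gen) ∧ l.length = k ∧ l.prod = g}

/-- `t` is a reflection with respect to the generating set `Gen`:
a conjugate `x s x⁻¹` of a generator `s ∈ Gen` by an element `x` of the group
generated by `Gen`. -/
def IsGenReflection {G : Type*} [Group G] (Gen : Set G) (t : G) : Prop :=
  ∃ x ∈ Subgroup.closure Gen, ∃ s ∈ Gen, t = x * s * x⁻¹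

/-- The Bruhat order with respect to the generating set `Gen`: `u ≤ w` iff
`w = u t₁ ⋯ tₘ` for reflections `t₁, …, tₘ` such that the length strictly
increases along the partial products `u t₁ ⋯ tᵢ`. -/
def genBruhatLE {G : Type*} [Group G] (Gen : Set G) (u w : G) : Prop :=
  ∃ ts : List G, (∀ t ∈ ts, IsGenReflection Gen t) ∧
    w = ts.foldl (· * ·) u ∧
    ∀ k, k + 1 ≤ ts.length →
      glen Gen ((ts.take k).foldl (· * ·) u) < glen Gen ((ts.take (k + 1)).foldl (· * ·) u)

/-- An involution `w` of the group generated by `Gen` is Boolean if the principal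
order ideal of `w` in the Bruhat order on involutions is isomorphic, as a poset,
to the Boolean lattice of all subsets of some finite set. -/
def genBoolean {G : Type*} [Group G] (Gen : Set G) (w : G) : Prop :=
  ∃ (m : ℕ)
    (f : {u : G // u ∈ Subgroup.closure Gen ∧ u * u = 1 ∧ genBruhatLE Gen u w} ≃ Finset (Fin m)),
    ∀ a b, genBruhatLE Gen a.1 b.1 ↔ f a ⊆ f b

/-- The absolute length of `g` with respect to the generating set `Gen`:
the minimal number of reflections whose product is `g`. -/
noncomputable def alen {G : Type*} [Group G] (Gen : Set G) (g : G) : ℕ :=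
  sInf {k : ℕ | ∃ ts : List G, (∀ t ∈ ts, IsGenReflection Gen t) ∧ ts.length = k ∧ ts.prod = g}

/-- The generating set `{s₁, …, sᵢ}` of the standard parabolic subgroup `Wᵢ`. -/
def parabGen {n : ℕ} {W : Type*} [Group W] {M : CoxeterMatrix (Fin n)}
    (cs : CoxeterSystem M W) (i : ℕ) : Set W :=
  {w : W | ∃ b : Fin n, (b : ℕ) < i ∧ w = cs.simple b}

/-- `g(Wᵢ, k)`: the number of Boolean involutions of rank `k` in the group
generated by `Gen`, where the rank of an involution `w` is `(ℓ(w) + ℓ'(w)) / 2`. -/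
noncomputable def gCount {G : Type*} [Group G] (Gen : Set G) (k : ℕ) : ℕ :=
  Set.ncard {w : G | w ∈ Subgroup.closure Gen ∧ w * w = 1 ∧ genBoolean Gen w ∧
    (glen Gen w + alen Gen w) / 2 = k}

/-- `h(Wᵢ)`: the total number of Boolean involutions in the group generated by `Gen`. -/
noncomputable def hCount {G : Type*} [Group G] (Gen : Set G) : ℕ :=
  Set.ncard {w : G | w ∈ Subgroup.closure Gen ∧ w * w = 1 ∧ genBoolean Gen w}

namespace BoolInv

/-! ### The geometric representation -/

section Geometric

variable {B : Type*} [Fintype B] [DecidableEq B]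

/-- The coroot of `i` in the geometric representation with basis the simple roots: the linear form
`2 B(αᵢ, ·)`, where `B(αᵢ, αⱼ) = -cos (π / M i j)`. The entry `M i j = 0` stands for infinite
order; then `π / 0 = 0` gives `B(αᵢ, αⱼ) = -1`, as it should. -/
noncomputable def geomForm (M : CoxeterMatrix B) (i : B) : (B → ℝ) →ₗ[ℝ] ℝ where
  toFun v := ∑ j, -2 * Real.cos (Real.pi / (M i j : ℝ)) * v j
  map_add' v w := by simp [mul_add, Finset.sum_add_distrib]
  map_smul' c v := by
    simp only [Pi.smul_apply, smul_eq_mul, RingHom.id_apply, Finset.mul_sum]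
    exact Finset.sum_congr rfl fun j _ => by ring

theorem geomForm_single (M : CoxeterMatrix B) (i j : B) :
    geomForm M i (Pi.single j 1) = -2 * Real.cos (Real.pi / (M i j : ℝ)) := by
  simp only [geomForm, LinearMap.coe_mk, AddHom.coe_mk]
  rw [Finset.sum_eq_single j]
  · simp
  · intro b _ hb
    simp [hb]
  · simp

theorem geomForm_self (M : CoxeterMatrix B) (i : B) :
    geomForm M i (Pi.single i 1) = 2 := by
  rw [geomForm_single]; simp

/-- The reflection `v ↦ v - 2 B(αᵢ, v) αᵢ` of the geometric representation. -/
noncomputable def geomRefl (M : CoxeterMatrix B) (i : B) : (B → ℝ) ≃ₗ[ℝ] (B → ℝ) :=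
  Module.reflection (geomForm_self M i)

/-- The coefficients in the formula for the `m`-th power of a product of two reflections vanish
when the two reflections generate a finite dihedral group of order `2 m`: `S k` at `2 cos φ` is
`sin ((k + 1) φ) / sin φ`. Divisions by `2` are integer divisions. -/
theorem chebyshev_vanish (m : ℕ) (hm : 3 ≤ m) (t : ℝ)
    (ht : t = 2 * Real.cos (2 * Real.pi / m)) :
    ((Polynomial.Chebyshev.S ℝ (((m : ℤ) - 2) / 2)).eval t *
      ((Polynomial.Chebyshev.S ℝ (((m : ℤ) - 1) / 2)).eval t +
        (Polynomial.Chebyshev.S ℝ (((m : ℤ) - 3) / 2)).eval t) = 0) ∧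
    ((Polynomial.Chebyshev.S ℝ (((m : ℤ) - 1) / 2)).eval t *
      ((Polynomial.Chebyshev.S ℝ ((m : ℤ) / 2)).eval t +
        (Polynomial.Chebyshev.S ℝ (((m : ℤ) - 2) / 2)).eval t) = 0) := by
  have hm0 : (0 : ℝ) < m := by positivity
  have hm3 : (3 : ℝ) ≤ m := by exact_mod_cast hm
  set φ : ℝ := 2 * Real.pi / m with hφ
  have hmφ : (m : ℝ) * φ = 2 * Real.pi := by rw [hφ]; field_simp
  have hsin : Real.sin φ ≠ 0 := by
    apply ne_of_gt
    apply Real.sin_pos_of_pos_of_lt_pi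
    · positivity
    · nlinarith [Real.pi_pos]
  have hS : ∀ k : ℤ, (Polynomial.Chebyshev.S ℝ k).eval t * Real.sin φ
      = Real.sin ((k + 1) * φ) := by
    intro k; rw [ht]; exact Polynomial.Chebyshev.S_two_mul_real_cos φ k
  rcases Nat.even_or_odd' m with ⟨k, rfl | rfl⟩
  · have e1 : (((2 * k : ℕ) : ℤ) - 2) / 2 = k - 1 := by omega
    have e2 : (((2 * k : ℕ) : ℤ) - 1) / 2 = k - 1 := by omega
    have h0 : (Polynomial.Chebyshev.S ℝ ((k : ℤ) - 1)).eval t = 0 := by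
      have h := hS ((k : ℤ) - 1)
      have : (((k : ℤ) - 1 : ℤ) + 1 : ℝ) * φ = Real.pi := by
        push_cast at hmφ ⊢; linarith
      rw [this, Real.sin_pi] at h
      exact (mul_eq_zero.mp h).resolve_right hsin
    rw [e1, e2, h0]; simp
  · have e1 : (((2 * k + 1 : ℕ) : ℤ) - 2) / 2 = k - 1 := by omega
    have e2 : (((2 * k + 1 : ℕ) : ℤ) - 1) / 2 = k := by omega
    have e3 : (((2 * k + 1 : ℕ) : ℤ) - 3) / 2 = k - 1 := by omega
    have e4 : (((2 * k + 1 : ℕ) : ℤ)) / 2 = k := by omega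
    have h0 : (Polynomial.Chebyshev.S ℝ (k : ℤ)).eval t
        + (Polynomial.Chebyshev.S ℝ ((k : ℤ) - 1)).eval t = 0 := by
      have h := hS (k : ℤ)
      have h' := hS ((k : ℤ) - 1)
      have a1 : (((k : ℤ) : ℝ) + 1) * φ = 2 * Real.pi - k * φ := by
        push_cast at hmφ ⊢; linarith
      have a2 : ((((k : ℤ) - 1 : ℤ) : ℝ) + 1) * φ = k * φ := by push_cast; ring
      rw [a1, Real.sin_two_pi_sub] at h
      rw [a2] at h'
      have : ((Polynomial.Chebyshev.S ℝ (k : ℤ)).eval t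
        + (Polynomial.Chebyshev.S ℝ ((k : ℤ) - 1)).eval t) * Real.sin φ = 0 := by
        rw [add_mul, h, h']; ring
      exact (mul_eq_zero.mp this).resolve_right hsin
    rw [e1, e2, e3, e4, h0]; simp

/-- The reflections of the geometric representation satisfy the braid relations. -/
theorem geomRefl_liftable (M : CoxeterMatrix B) : M.IsLiftable (geomRefl M) := by
  intro i j
  have key := fun z => Module.reflection_mul_reflection_pow_apply
    (geomForm_self M i) (geomForm_self M j) (M i j) z
  ext1 z
  specialize key z
  rw [geomRefl, geomRefl, LinearEquiv.coe_one, id, key]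
  have hsymm : M j i = M i j := M.symmetric j i
  rw [geomForm_single, geomForm_single, hsymm]
  by_cases h0 : M i j = 0
  · simp [h0]
  by_cases h1 : M i j = 1
  · have hij : i = j := by
      by_contra h
      exact M.off_diagonal i j h h1
    subst hij
    simp [sub_eq_add_neg]
    module
  by_cases h2 : M i j = 2
  · rw [h2]; simp; module
  · obtain ⟨c1, c2⟩ := chebyshev_vanish (M i j) (by omega)
      (-2 * Real.cos (Real.pi / (M i j : ℝ)) * (-2 * Real.cos (Real.pi / (M i j : ℝ))) - 2) (by
        rw [mul_div_assoc, Real.cos_two_mul]; ring)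
    rw [c1, c2]; simp

variable {W : Type*} [Group W] {M : CoxeterMatrix B} (cs : CoxeterSystem M W)

/-- The geometric representation of a Coxeter group. -/
noncomputable def geomRep : W →* ((B → ℝ) ≃ₗ[ℝ] (B → ℝ)) :=
  cs.lift ⟨geomRefl M, geomRefl_liftable M⟩

theorem geomRep_simple (i : B) (v : B → ℝ) :
    geomRep cs (cs.simple i) v = v - geomForm M i v • Pi.single i 1 := by
  rw [geomRep, cs.lift_apply_simple (geomRefl_liftable M)]
  exact Module.reflection_apply _ _

/-- Distinct generators act by reflections in different simple roots, so they are distinct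
elements of the group. -/
theorem simple_injective : Function.Injective cs.simple := by
  intro i j hij
  by_contra hne
  have h := geomRep_simple cs i (Pi.single i 1)
  rw [hij, geomRep_simple, geomForm_self] at h
  have h' := congrFun h i
  simp [hne] at h'
  norm_num at h'

end Geometric

/-! ### The strong exchange property -/

section Exchange

variable {B : Type*} {W : Type*} [Group W] {M : CoxeterMatrix B} (cs : CoxeterSystem M W)

theorem end_mul_apply {α : Type*} (f g : Function.End α) (x : α) : (f * g) x = f (g x) := rfl

theorem end_one_apply {α : Type*} (x : α) : (1 : Function.End α) x = x := rfl

open Classical in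
/-- The action of a generator `s` on signed elements `(t, ε)` of `W`: conjugation of `t` by `s`,
with a change of sign when `t = s`. -/
noncomputable def signAct (i : B) : Function.End (W × ZMod 2) := fun x =>
  (cs.simple i * x.1 * cs.simple i, x.2 + if x.1 = cs.simple i then 1 else 0)

open Classical in
/-- For `2 k` steps of the action of the dihedral group of `i` and `j`, the sign changes once for
each `r < 2 k` such that `t` is the `r`-th reflection of that group. -/
theorem signAct_pow (i j : B) (k : ℕ) (t : W) (ε : ZMod 2) :
    ((signAct cs i * signAct cs j) ^ k) (t, ε) =
      ((cs.simple i * cs.simple j) ^ k * t * ((cs.simple i * cs.simple j) ^ k)⁻¹,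
        ε + ∑ r ∈ Finset.range (2 * k),
          if t = ((cs.simple i * cs.simple j) ^ r)⁻¹ * cs.simple j then 1 else 0) := by
  set p := cs.simple i * cs.simple j with hp
  have hinv : p⁻¹ = cs.simple j * cs.simple i := by simp [hp]
  have hsp : ∀ r : ℕ, cs.simple j * p ^ r = (p ^ r)⁻¹ * cs.simple j := by
    intro r
    have : cs.simple j * p ^ r * (cs.simple j)⁻¹ = (p ^ r)⁻¹ := by
      rw [← conj_pow, ← inv_pow, hinv]; simp [hp, mul_assoc]
    rw [← this]; simp
  induction k with
  | zero => simp [end_one_apply]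
  | succ k ih =>
    rw [pow_succ', end_mul_apply, ih]
    simp only [end_mul_apply, signAct]
    have h1 : (p ^ k * t * (p ^ k)⁻¹ = cs.simple j) ↔ t = (p ^ (2 * k))⁻¹ * cs.simple j := by
      rw [mul_inv_eq_iff_eq_mul, hsp, two_mul, pow_add, mul_inv_rev, mul_assoc (p ^ k)⁻¹]
      exact eq_inv_mul_iff_mul_eq.symm
    have h2 : (cs.simple j * (p ^ k * t * (p ^ k)⁻¹) * cs.simple j = cs.simple i) ↔
        t = (p ^ (2 * k + 1))⁻¹ * cs.simple j := by
      have e : (p ^ (2 * k + 1))⁻¹ * cs.simple j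
          = (p ^ k)⁻¹ * (cs.simple j * cs.simple i * cs.simple j) * p ^ k := by
        have : 2 * k + 1 = k + 1 + k := by ring
        rw [this, pow_add, pow_add, pow_one, mul_inv_rev, mul_inv_rev, hinv]
        simp only [mul_assoc]
        rw [hsp]
      rw [e]
      constructor
      · intro h
        rw [← h]; simp [mul_assoc]
      · rintro rfl
        simp [mul_assoc]
    rw [show 2 * (k + 1) = 2 * k + 1 + 1 by ring, Finset.sum_range_succ, Finset.sum_range_succ]
    simp only [h1, h2]
    refine Prod.ext ?_ ?_
    · simp only [pow_succ', mul_inv_rev, hinv]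
      simp only [hp, mul_assoc]
    · simp only [add_assoc]

theorem signAct_liftable : M.IsLiftable (signAct cs) := by
  classical
  intro i j
  funext ⟨t, ε⟩
  rw [signAct_pow, cs.simple_mul_simple_pow, two_mul, Finset.sum_range_add]
  have : ∀ r, (cs.simple i * cs.simple j) ^ (M i j + r) = (cs.simple i * cs.simple j) ^ r := by
    intro r; rw [pow_add, cs.simple_mul_simple_pow, one_mul]
  simp only [this, CharTwo.add_self_eq_zero]
  simp [end_one_apply]

/-- The action of the Coxeter group on signed elements. -/
noncomputable def signHom : W →* Function.End (W × ZMod 2) :=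
  cs.lift ⟨signAct cs, signAct_liftable cs⟩

theorem signHom_simple (i : B) : signHom cs (cs.simple i) = signAct cs i :=
  cs.lift_apply_simple (signAct_liftable cs) i

open Classical in
/-- The change of sign of `t` is the parity of the number of its occurrences in the right
inversion sequence of any word for the acting element. -/
theorem signHom_wordProd (ω : List B) (t : W) (ε : ZMod 2) :
    signHom cs (cs.wordProd ω) (t, ε) =
      (cs.wordProd ω * t * (cs.wordProd ω)⁻¹, ε + ((cs.rightInvSeq ω).count t : ZMod 2)) := by
  induction ω with
  | nil => simp [end_one_apply]
  | cons i ω ih =>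
    rw [cs.wordProd_cons, map_mul, end_mul_apply, ih, signHom_simple]
    simp only [signAct, CoxeterSystem.rightInvSeq, List.count_cons]
    refine Prod.ext ?_ ?_
    · simp [mul_assoc]
    · have : (cs.wordProd ω * t * (cs.wordProd ω)⁻¹ = cs.simple i) ↔
          ((cs.wordProd ω)⁻¹ * cs.simple i * cs.wordProd ω = t) := by
        constructor
        · intro h; rw [← h]; simp [mul_assoc]
        · rintro rfl; simp [mul_assoc]
      simp only [this, beq_iff_eq]
      push_cast
      ring

/-- The sign by which `w` acts on `t`. It depends on `w` alone and is computed by any word for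
`w`, so that a nonzero value forces `t` into the inversion sequence of each of these words. -/
noncomputable def invSign (w t : W) : ZMod 2 := (signHom cs w (t, 0)).2

theorem signHom_apply (w t : W) (ε : ZMod 2) :
    signHom cs w (t, ε) = (w * t * w⁻¹, ε + invSign cs w t) := by
  obtain ⟨ω, rfl⟩ := cs.wordProd_surjective w
  rw [invSign, signHom_wordProd, signHom_wordProd]; simp

theorem invSign_mul (w v t : W) :
    invSign cs (w * v) t = invSign cs v t + invSign cs w (v * t * v⁻¹) := by
  rw [invSign, map_mul, end_mul_apply, signHom_apply, signHom_apply]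
  simp

theorem invSign_inv (w t : W) : invSign cs w⁻¹ (w * t * w⁻¹) = invSign cs w t := by
  have h := invSign_mul cs w⁻¹ w t
  rw [inv_mul_cancel] at h
  have h1 : invSign cs 1 t = 0 := by simp [invSign, end_one_apply]
  rw [h1] at h
  have := CharTwo.add_self_eq_zero (invSign cs w t)
  calc _ = 0 - invSign cs w t := by rw [h]; ring
    _ = _ := by rw [← this]; ring

theorem invSign_refl {t : W} (ht : cs.IsReflection t) : invSign cs t t = 1 := by
  obtain ⟨w, i, rfl⟩ := ht
  have e : w⁻¹ * (w * cs.simple i * w⁻¹) * w⁻¹⁻¹ = cs.simple i := by simp [mul_assoc]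
  rw [invSign_mul, e, invSign_mul]
  have h3 : invSign cs (cs.simple i) (cs.simple i) = 1 := by
    simp [invSign, signHom_simple, signAct]
  have e2 : cs.simple i * cs.simple i * (cs.simple i)⁻¹ = cs.simple i := by simp
  rw [e2, h3, invSign_inv]
  have := CharTwo.add_self_eq_zero (invSign cs w (cs.simple i))
  linear_combination this

theorem mem_rightInvSeq_of_invSign (ω : List B) (t : W) (h : invSign cs (cs.wordProd ω) t ≠ 0) :
    t ∈ cs.rightInvSeq ω := by
  classical
  rw [invSign, signHom_wordProd] at h
  by_contra hn
  rw [List.count_eq_zero_of_not_mem hn] at h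
  simp at h

theorem length_lt_of_invSign (w t : W) (h : invSign cs w t ≠ 0) :
    cs.length (w * t) < cs.length w := by
  obtain ⟨ω, hω, rfl⟩ := cs.exists_isReduced w
  exact (cs.isRightInversion_of_mem_rightInvSeq hω (mem_rightInvSeq_of_invSign cs ω t h)).2

/-- **Strong exchange property**: if a reflection shortens the value of a word (which need not be
reduced), the product is obtained by deleting one letter. -/
theorem strong_exchange (ω : List B) {t : W} (ht : cs.IsReflection t)
    (h : cs.length (cs.wordProd ω * t) < cs.length (cs.wordProd ω)) :
    ∃ j < ω.length, cs.wordProd ω * t = cs.wordProd (ω.eraseIdx j) := by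
  have hne : invSign cs (cs.wordProd ω) t ≠ 0 := by
    intro h0
    have h1 : invSign cs (cs.wordProd ω * t) t ≠ 0 := by
      rw [invSign_mul, invSign_refl cs ht, ht.inv, ht.mul_self, one_mul, h0]
      simp
    have := length_lt_of_invSign cs _ _ h1
    rw [mul_assoc, ht.mul_self, mul_one] at this
    omega
  obtain ⟨j, hj, hjt⟩ := List.mem_iff_getElem.mp (mem_rightInvSeq_of_invSign cs ω t hne)
  have hj' : j < ω.length := by simpa using hj
  refine ⟨j, hj', ?_⟩
  rw [← cs.wordProd_mul_getD_rightInvSeq, List.getD_eq_getElem _ _ hj, hjt]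

end Exchange

/-! ### Groups with the strong exchange property -/

/-- A generating set of involutions for which reflections always change the length and the strong
exchange property holds for arbitrary words. This is all that is used about the standard parabolic
subgroups of a Coxeter group until ranks are computed. The group in question is `Subgroup.closure
Gen`, not the whole of `G`. -/
structure ExchSys {G : Type*} [Group G] (Gen : Set G) : Prop where
  sq : ∀ s ∈ Gen, s * s = 1
  ne : ∀ w ∈ Subgroup.closure Gen, ∀ t, IsGenReflection Gen t → glen Gen (w * t) ≠ glen Gen w
  exch : ∀ l : List G, (∀ x ∈ l, x ∈ Gen) → ∀ t, IsGenReflection Gen t →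
    glen Gen (l.prod * t) < glen Gen l.prod →
    ∃ j < l.length, l.prod * t = (l.eraseIdx j).prod

section Words

variable {G : Type*} [Group G] {Gen : Set G}

theorem glen_prod_le (l : List G) (hl : ∀ x ∈ l, x ∈ Gen) : glen Gen l.prod ≤ l.length :=
  Nat.sInf_le ⟨l, hl, rfl, rfl⟩

theorem prod_mem_closure {J : Set G} (l : List G) (hl : ∀ x ∈ l, x ∈ J) :
    l.prod ∈ Subgroup.closure J :=
  Subgroup.list_prod_mem _ fun x hx => Subgroup.subset_closure (hl x hx)

theorem prod_reverse_mul_prod (l : List G) (hl : ∀ x ∈ l, x * x = 1) :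
    l.reverse.prod * l.prod = 1 := by
  induction l with
  | nil => simp
  | cons a l ih =>
    have ha := hl a (by simp)
    have := ih fun x hx => hl x (by simp [hx])
    simp only [List.reverse_cons, List.prod_append, List.prod_cons, List.prod_nil, mul_one]
    calc l.reverse.prod * a * (a * l.prod) = l.reverse.prod * (a * a) * l.prod := by group
      _ = 1 := by rw [ha, mul_one, this]

theorem exists_word {J : Set G} (hJ : ∀ s ∈ J, s * s = 1) {w : G}
    (hw : w ∈ Subgroup.closure J) : ∃ l : List G, (∀ x ∈ l, x ∈ J) ∧ l.prod = w := by
  induction hw using Subgroup.closure_induction with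
  | mem x hx => exact ⟨[x], by simpa using hx, by simp⟩
  | one => exact ⟨[], by simp, rfl⟩
  | mul x y _ _ hx hy =>
    obtain ⟨l, hl, rfl⟩ := hx
    obtain ⟨l', hl', rfl⟩ := hy
    refine ⟨l ++ l', ?_, by simp⟩
    intro z hz
    rcases List.mem_append.mp hz with h | h
    exacts [hl z h, hl' z h]
  | inv x _ hx =>
    obtain ⟨l, hl, rfl⟩ := hx
    refine ⟨l.reverse, by simpa using hl, ?_⟩
    exact eq_inv_of_mul_eq_one_left (prod_reverse_mul_prod l fun x hx => hJ x (hl x hx))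

theorem exists_shortest {J : Set G} (hJ : ∀ s ∈ J, s * s = 1) {w : G}
    (hw : w ∈ Subgroup.closure J) :
    ∃ l : List G, (∀ x ∈ l, x ∈ J) ∧ l.length = glen J w ∧ l.prod = w := by
  obtain ⟨l, hl, hlw⟩ := exists_word hJ hw
  exact Nat.sInf_mem (s := {k : ℕ | ∃ l : List G, (∀ t ∈ l, t ∈ J) ∧ l.length = k ∧ l.prod = w})
    ⟨l.length, l, hl, rfl, hlw⟩

theorem isGenReflection_of_mem {s : G} (hs : s ∈ Gen) : IsGenReflection Gen s :=
  ⟨1, Subgroup.one_mem _, s, hs, by simp⟩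

theorem refl_conj {t x : G} (ht : IsGenReflection Gen t)
    (hx : x ∈ Subgroup.closure Gen) : IsGenReflection Gen (x * t * x⁻¹) := by
  obtain ⟨y, hy, s, hs, rfl⟩ := ht
  exact ⟨x * y, Subgroup.mul_mem _ hx hy, s, hs, by group⟩

theorem refl_mem {t : G} (ht : IsGenReflection Gen t) :
    t ∈ Subgroup.closure Gen := by
  obtain ⟨y, hy, s, hs, rfl⟩ := ht
  exact Subgroup.mul_mem _ (Subgroup.mul_mem _ hy (Subgroup.subset_closure hs))
    (Subgroup.inv_mem _ hy)

end Words

section Generic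

variable {G : Type*} [Group G] {Gen : Set G}

namespace ExchSys

theorem refl_sq (E : ExchSys Gen) {t : G} (ht : IsGenReflection Gen t) : t * t = 1 := by
  obtain ⟨y, hy, s, hs, rfl⟩ := ht
  calc y * s * y⁻¹ * (y * s * y⁻¹) = y * (s * s) * y⁻¹ := by group
    _ = 1 := by rw [E.sq s hs]; group

theorem inv_gen (E : ExchSys Gen) {s : G} (hs : s ∈ Gen) : s⁻¹ = s :=
    inv_eq_of_mul_eq_one_left (E.sq s hs)

theorem cancel_right (E : ExchSys Gen) {s : G} (hs : s ∈ Gen) (w : G) : w * s * s = w := by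
  rw [mul_assoc, E.sq s hs, mul_one]

theorem cancel_left (E : ExchSys Gen) {s : G} (hs : s ∈ Gen) (w : G) : s * (s * w) = w := by
  rw [← mul_assoc, E.sq s hs, one_mul]

theorem mem_gen (_ : ExchSys Gen) {s : G} (hs : s ∈ Gen) : s ∈ Subgroup.closure Gen :=
  Subgroup.subset_closure hs

theorem mul_mem_right (E : ExchSys Gen) {w s : G} (hw : w ∈ Subgroup.closure Gen) (hs : s ∈ Gen) :
    w * s ∈ Subgroup.closure Gen := Subgroup.mul_mem _ hw (E.mem_gen hs)

theorem mul_mem_left (E : ExchSys Gen) {w s : G} (hw : w ∈ Subgroup.closure Gen) (hs : s ∈ Gen) :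
    s * w ∈ Subgroup.closure Gen := Subgroup.mul_mem _ (E.mem_gen hs) hw

theorem glen_inv_le (E : ExchSys Gen) {w : G} (hw : w ∈ Subgroup.closure Gen) :
    glen Gen w⁻¹ ≤ glen Gen w := by
  obtain ⟨l, hl, hlen, rfl⟩ := exists_shortest E.sq hw
  have h : l.prod⁻¹ = l.reverse.prod :=
    (eq_inv_of_mul_eq_one_left (prod_reverse_mul_prod l fun x hx => E.sq x (hl x hx))).symm
  rw [← hlen, h, ← List.length_reverse]
  exact glen_prod_le _ (by simpa using hl)

theorem glen_inv (E : ExchSys Gen) {w : G} (hw : w ∈ Subgroup.closure Gen) :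
    glen Gen w⁻¹ = glen Gen w :=
  le_antisymm (E.glen_inv_le hw) (by simpa using E.glen_inv_le (Subgroup.inv_mem _ hw))

theorem glen_one (_ : ExchSys Gen) : glen Gen (1 : G) = 0 := by
  have := glen_prod_le (Gen := Gen) [] (by simp)
  simpa using this

theorem eq_one_of_glen (E : ExchSys Gen) {w : G} (hw : w ∈ Subgroup.closure Gen)
    (h : glen Gen w = 0) : w = 1 := by
  obtain ⟨l, hl, hlen, rfl⟩ := exists_shortest E.sq hw
  rw [h] at hlen
  simp [List.length_eq_zero_iff.mp hlen]

theorem glen_mul_le (E : ExchSys Gen) {w s : G} (hw : w ∈ Subgroup.closure Gen) (hs : s ∈ Gen) :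
    glen Gen (w * s) ≤ glen Gen w + 1 := by
  obtain ⟨l, hl, hlen, rfl⟩ := exists_shortest E.sq hw
  have := glen_prod_le (Gen := Gen) (l ++ [s]) (by
    intro x hx
    rcases List.mem_append.mp hx with h | h
    · exact hl x h
    · simp at h; exact h ▸ hs)
  simpa [hlen] using this

theorem glen_mul (E : ExchSys Gen) {w s : G} (hw : w ∈ Subgroup.closure Gen) (hs : s ∈ Gen) :
    glen Gen (w * s) = glen Gen w + 1 ∨ glen Gen (w * s) + 1 = glen Gen w := by
  have h1 := E.glen_mul_le hw hs
  have h2 := E.glen_mul_le (E.mul_mem_right hw hs) hs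
  rw [E.cancel_right hs] at h2
  have h3 := E.ne w hw s (isGenReflection_of_mem hs)
  omega

theorem glen_left (E : ExchSys Gen) {w s : G} (hw : w ∈ Subgroup.closure Gen) (hs : s ∈ Gen) :
    glen Gen (s * w) = glen Gen (w⁻¹ * s) := by
  rw [← E.glen_inv (E.mul_mem_left hw hs), mul_inv_rev, E.inv_gen hs]

theorem glen_mul_left (E : ExchSys Gen) {w s : G} (hw : w ∈ Subgroup.closure Gen) (hs : s ∈ Gen) :
    glen Gen (s * w) = glen Gen w + 1 ∨ glen Gen (s * w) + 1 = glen Gen w := by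
  rw [E.glen_left hw hs, ← E.glen_inv hw]
  exact E.glen_mul (Subgroup.inv_mem _ hw) hs

theorem glen_gen (E : ExchSys Gen) {s : G} (hs : s ∈ Gen) : glen Gen s = 1 := by
  have := E.glen_mul (Subgroup.one_mem _) hs
  rw [E.glen_one, one_mul] at this
  omega

/-- Every non-identity element has a right descent. -/
theorem exists_descent (E : ExchSys Gen) {w : G} (hw : w ∈ Subgroup.closure Gen) (h1 : w ≠ 1) :
    ∃ s ∈ Gen, glen Gen (w * s) < glen Gen w := by
  obtain ⟨l, hl, hlen, hlw⟩ := exists_shortest E.sq hw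
  rcases List.eq_nil_or_concat l with rfl | ⟨l', s, rfl⟩
  · exact absurd hlw.symm (by simpa using h1)
  · have hs : s ∈ Gen := hl s (by simp)
    refine ⟨s, hs, ?_⟩
    have hw' : w * s = l'.prod := by
      rw [← hlw]; simp [mul_assoc, E.sq s hs]
    rw [hw', ← hlen]
    have := glen_prod_le (Gen := Gen) l' fun x hx => hl x (by simp [hx])
    simp; omega

/-- Elements of a standard parabolic subgroup: the exchange condition does not leave it. -/
theorem exch_parabolic (E : ExchSys Gen) {J : Set G} (hJ : J ⊆ Gen) {w t : G}
    (hw : w ∈ Subgroup.closure J)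
    (ht : IsGenReflection Gen t) (h : glen Gen (w * t) < glen Gen w) :
    w * t ∈ Subgroup.closure J := by
  obtain ⟨l, hl, rfl⟩ := exists_word (fun s hs => E.sq s (hJ hs)) hw
  obtain ⟨j, _, hj⟩ := E.exch l (fun x hx => hJ (hl x hx)) t ht h
  rw [hj]
  exact prod_mem_closure _ fun x hx => hl x (List.mem_of_mem_eraseIdx hx)

/-- A generator lies in a standard parabolic subgroup only if it is one of its generators. -/
theorem gen_mem_parabolic (E : ExchSys Gen) {J : Set G} (hJ : J ⊆ Gen) {s : G} (hs : s ∈ Gen)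
    (h : s ∈ Subgroup.closure J) : s ∈ J := by
  have key : ∀ k : ℕ, ∀ l : List G, l.length = k → (∀ x ∈ l, x ∈ J) → l.prod = s → s ∈ J := by
    intro k
    induction k using Nat.strong_induction_on with
    | _ k ih =>
    intro l hk hl hls
    rcases List.eq_nil_or_concat l with rfl | ⟨l', x, rfl⟩
    · have := E.glen_gen hs
      rw [← hls] at this
      simp [E.glen_one] at this
    · have hx : x ∈ J := hl x (by simp)
      by_cases hxs : x = s
      · exact hxs ▸ hx
      have hxG := hJ hx
      have hl' : ∀ y ∈ l', y ∈ J := fun y hy => hl y (by simp [hy])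
      have hp : l'.prod = s * x := by
        rw [← hls]; simp [mul_assoc, E.sq x hxG]
      have hp2 : l'.prod * x = s := by rw [hp, E.cancel_right hxG]
      have hlt : glen Gen (l'.prod * x) < glen Gen l'.prod := by
        rw [hp2, E.glen_gen hs]
        have h2 := E.glen_mul (E.mem_gen hs) hxG
        rw [E.glen_gen hs, ← hp] at h2
        rcases h2 with h2 | h2
        · omega
        · exfalso
          have h3 : l'.prod = 1 := E.eq_one_of_glen
            (prod_mem_closure _ fun y hy => hJ (hl' y hy)) (by omega)
          rw [h3, one_mul] at hp2
          exact hxs hp2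
      obtain ⟨j, hj, hje⟩ := E.exch l' (fun y hy => hJ (hl' y hy)) x
        (isGenReflection_of_mem hxG) hlt
      refine ih (l'.eraseIdx j).length ?_ (l'.eraseIdx j) rfl
        (fun y hy => hl' y (List.mem_of_mem_eraseIdx hy)) (by rw [← hje, hp2])
      have := List.length_eraseIdx_of_lt hj
      rw [List.concat_eq_append, List.length_append, List.length_singleton] at hk
      omega
  obtain ⟨l, hl, hls⟩ := exists_word (fun s hs => E.sq s (hJ hs)) h
  exact key _ l rfl hl hls

/-- A generator outside `J` is not a right descent of the elements of the parabolic subgroup of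
`J`. -/
theorem glen_lt_of_not_mem (E : ExchSys Gen) {J : Set G} (hJ : J ⊆ Gen) {s w : G} (hs : s ∈ Gen)
    (hsJ : s ∉ J) (hw : w ∈ Subgroup.closure J) : glen Gen w < glen Gen (w * s) := by
  have hwG : w ∈ Subgroup.closure Gen := Subgroup.closure_mono hJ hw
  rcases E.glen_mul hwG hs with h | h
  · omega
  · exfalso
    have h1 := E.exch_parabolic hJ hw (isGenReflection_of_mem hs) (by omega)
    exact hsJ (E.gen_mem_parabolic hJ hs ((Subgroup.mul_mem_cancel_left _ hw).mp h1))

/-- If neither side shortens and conjugation by `s` moves `w`, then conjugation lengthens. -/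
theorem glen_conj (E : ExchSys Gen) {w s : G} (hw : w ∈ Subgroup.closure Gen) (hs : s ∈ Gen)
    (h1 : glen Gen w < glen Gen (w * s)) (h2 : glen Gen w < glen Gen (s * w))
    (hne : s * w * s ≠ w) : glen Gen (s * w * s) = glen Gen w + 2 := by
  have h2' := E.glen_mul_left hw hs
  rcases E.glen_mul (E.mul_mem_left hw hs) hs with h | h
  · omega
  exfalso
  obtain ⟨l, hl, hlen, rfl⟩ := exists_shortest E.sq hw
  obtain ⟨j, hj, hje⟩ := E.exch (s :: l) (by simpa [hs] using hl) s (isGenReflection_of_mem hs)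
    (by simp only [List.prod_cons]; omega)
  rw [List.prod_cons] at hje
  rcases j with _ | j
  · exact hne (by simpa using hje)
  · simp only [List.eraseIdx_cons_succ, List.prod_cons, mul_assoc] at hje
    have h3 : l.prod * s = (l.eraseIdx j).prod := mul_left_cancel hje
    have h4 := glen_prod_le (Gen := Gen) (l.eraseIdx j) fun x hx =>
      hl x (List.mem_of_mem_eraseIdx hx)
    have h5 : (l.eraseIdx j).length + 1 = l.length := by
      have : j < l.length := by simpa using hj
      have := List.length_eraseIdx_add_one this
      exact this
    rw [← h3] at h4
    omega

end ExchSys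

/-! ### The Bruhat order and the lifting property -/

/-- One step of the Bruhat order: right multiplication by a reflection which increases the length,
by any amount. -/
def Step (Gen : Set G) (u w : G) : Prop :=
  ∃ t, IsGenReflection Gen t ∧ w = u * t ∧ glen Gen u < glen Gen w

/-- The Bruhat order as the reflexive-transitive closure of `Step`. -/
def BLe (Gen : Set G) : G → G → Prop := Relation.ReflTransGen (Step Gen)

theorem genBruhatLE_iff (u w : G) : genBruhatLE Gen u w ↔ BLe Gen u w := by
  constructor
  · rintro ⟨ts, hts, rfl, hlt⟩
    induction ts generalizing u with
    | nil => exact Relation.ReflTransGen.refl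
    | cons t ts ih =>
      refine Relation.ReflTransGen.head (b := u * t) ⟨t, hts t (by simp), rfl, ?_⟩ ?_
      · simpa using hlt 0 (by simp)
      · refine ih (u * t) (fun x hx => hts x (by simp [hx])) fun k hk => ?_
        simpa using hlt (k + 1) (by simpa using hk)
  · intro h
    induction h using Relation.ReflTransGen.head_induction_on with
    | refl => exact ⟨[], by simp, rfl, by simp⟩
    | head h1 _ ih =>
      obtain ⟨t, ht, rfl, hlt⟩ := h1
      obtain ⟨ts, hts, hw, hl⟩ := ih
      refine ⟨t :: ts, by simpa [ht] using hts, by simpa using hw, ?_⟩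
      intro k hk
      rcases k with _ | k
      · simpa using hlt
      · simpa using hl k (by simpa using hk)

theorem BLe.refl (u : G) : BLe Gen u u := Relation.ReflTransGen.refl

theorem BLe.trans {u v w : G} (h : BLe Gen u v) (h' : BLe Gen v w) : BLe Gen u w :=
  Relation.ReflTransGen.trans h h'

theorem Step.ble {u w : G} (h : Step Gen u w) : BLe Gen u w := Relation.ReflTransGen.single h

theorem BLe.eq_or_lt {u w : G} (h : BLe Gen u w) : u = w ∨ glen Gen u < glen Gen w := by
  induction h with
  | refl => exact Or.inl rfl
  | tail _ h2 ih =>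
    obtain ⟨t, _, _, hlt⟩ := h2
    rcases ih with rfl | ih
    · exact Or.inr hlt
    · exact Or.inr (ih.trans hlt)

theorem BLe.antisymm {u w : G} (h : BLe Gen u w) (h' : BLe Gen w u) : u = w := by
  rcases h.eq_or_lt with h1 | h1
  · exact h1
  · rcases h'.eq_or_lt with h2 | h2
    · exact h2.symm
    · omega

theorem BLe.mem {u w : G} (h : BLe Gen u w) (hu : u ∈ Subgroup.closure Gen) :
    w ∈ Subgroup.closure Gen := by
  induction h with
  | refl => exact hu
  | tail _ h2 ih =>
    obtain ⟨t, ht, rfl, _⟩ := h2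
    exact Subgroup.mul_mem _ ih (refl_mem ht)

theorem BLe.inv' (E : ExchSys Gen) {u w : G} (hu : u ∈ Subgroup.closure Gen) (h : BLe Gen u w) :
    BLe Gen u⁻¹ w⁻¹ := by
  induction h with
  | refl => exact BLe.refl _
  | @tail b c h1 h2 ih =>
    refine ih.trans (Step.ble ?_)
    have hb : b ∈ Subgroup.closure Gen := BLe.mem h1 hu
    obtain ⟨t, ht, rfl, hlt⟩ := h2
    refine ⟨b * t * b⁻¹, refl_conj ht hb, ?_, ?_⟩
    · rw [mul_inv_rev, inv_eq_of_mul_eq_one_left (E.refl_sq ht)]; group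
    · rwa [E.glen_inv hb, E.glen_inv (Subgroup.mul_mem _ hb (refl_mem ht))]

namespace ExchSys

/-- Right multiplication by a generator `s` carries a step along a reflection other than `s` to a
step. If the length dropped instead, exchange in `l ++ [s]`, for `l` a reduced word of `u`, would
shorten `u * t` below `u` or give `t = s`. -/
theorem step_mul (E : ExchSys Gen) {u t s : G} (hu : u ∈ Subgroup.closure Gen) (hs : s ∈ Gen)
    (ht : IsGenReflection Gen t) (hts : t ≠ s) (hlt : glen Gen u < glen Gen (u * t)) :
    Step Gen (u * s) (u * t * s) := by
  have hut : u * t ∈ Subgroup.closure Gen := Subgroup.mul_mem _ hu (refl_mem ht)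
  have hr : IsGenReflection Gen (s * t * s) := by
    simpa [E.inv_gen hs] using refl_conj ht (E.mem_gen hs)
  have he : u * t * s = u * s * (s * t * s) := by
    simp only [← mul_assoc]; rw [E.cancel_right hs]
  refine ⟨s * t * s, hr, he, ?_⟩
  have hne := E.ne (u * s) (E.mul_mem_right hu hs) _ hr
  rw [← he] at hne
  by_contra hcon
  have hlt2 : glen Gen (u * t * s) < glen Gen (u * s) := by omega
  have a1 := E.glen_mul hu hs
  have a2 := E.glen_mul hut hs
  have hus : glen Gen (u * s) = glen Gen u + 1 := by omega
  obtain ⟨l, hl, hlen, hlu⟩ := exists_shortest E.sq hu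
  obtain ⟨j, hj, hje⟩ := E.exch (l ++ [s]) (by
    intro x hx
    rcases List.mem_append.mp hx with h | h
    · exact hl x h
    · simp at h; exact h ▸ hs) (s * t * s) hr (by
      simp only [List.prod_append, List.prod_cons, List.prod_nil, mul_one, hlu, ← he]; exact hlt2)
  simp only [List.prod_append, List.prod_cons, List.prod_nil, mul_one, hlu, ← he] at hje
  rcases Nat.lt_or_ge j l.length with h | h
  · rw [List.eraseIdx_append_of_lt_length h] at hje
    simp only [List.prod_append, List.prod_cons, List.prod_nil, mul_one] at hje
    have h3 := mul_right_cancel hje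
    have h4 := glen_prod_le (Gen := Gen) (l.eraseIdx j) fun x hx =>
      hl x (List.mem_of_mem_eraseIdx hx)
    have h5 := List.length_eraseIdx_add_one h
    rw [← h3] at h4
    omega
  · have hj' : j = l.length := by simp at hj; omega
    rw [List.eraseIdx_append_of_length_le h, hj'] at hje
    simp only [Nat.sub_self, List.eraseIdx_cons_zero, List.append_nil, hlu] at hje
    have : t * s = 1 := by
      rw [mul_assoc] at hje
      exact mul_eq_left.mp hje
    apply hts
    calc t = t * s * s := by rw [E.cancel_right hs]
      _ = s := by rw [this, one_mul]

theorem ble_mul (_ : ExchSys Gen) {u s : G} (hs : s ∈ Gen) (h : glen Gen u < glen Gen (u * s)) :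
    BLe Gen u (u * s) :=
  Step.ble ⟨s, isGenReflection_of_mem hs, rfl, h⟩

theorem mul_ble (E : ExchSys Gen) {u s : G} (hs : s ∈ Gen) (h : glen Gen (u * s) < glen Gen u) :
    BLe Gen (u * s) u :=
  Step.ble ⟨s, isGenReflection_of_mem hs, (E.cancel_right hs u).symm, h⟩

/-- The lifting property, without conditions on descents; the following lemmas specialize it. -/
theorem lift_left (E : ExchSys Gen) {u w s : G} (hu : u ∈ Subgroup.closure Gen) (hs : s ∈ Gen)
    (h : BLe Gen u w) :
    BLe Gen (u * s) w ∨ BLe Gen (u * s) (w * s) := by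
  induction h with
  | refl => exact Or.inr (BLe.refl _)
  | @tail b c h1 h2 ih =>
    have hb := BLe.mem h1 hu
    rcases ih with ih | ih
    · exact Or.inl (ih.trans h2.ble)
    · obtain ⟨t, ht, rfl, hlt⟩ := h2
      by_cases hts : t = s
      · subst hts; exact Or.inl ih
      · exact Or.inr (ih.trans (E.step_mul hb hs ht hts hlt).ble)

theorem lift_right (E : ExchSys Gen) {u w s : G} (hu : u ∈ Subgroup.closure Gen) (hs : s ∈ Gen)
    (h : BLe Gen u w) :
    BLe Gen u (w * s) ∨ BLe Gen (u * s) (w * s) := by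
  induction h with
  | refl => exact Or.inr (BLe.refl _)
  | @tail b c h1 h2 ih =>
    have hb := BLe.mem h1 hu
    obtain ⟨t, ht, rfl, hlt⟩ := h2
    by_cases hts : t = s
    · subst hts; rw [E.cancel_right hs]; exact Or.inl h1
    · have := (E.step_mul hb hs ht hts hlt).ble
      exact ih.imp (fun h => h.trans this) (fun h => h.trans this)

theorem lift1 (E : ExchSys Gen) {u w s : G} (hu : u ∈ Subgroup.closure Gen) (hs : s ∈ Gen)
    (h : BLe Gen u w)
    (hd : glen Gen u < glen Gen (u * s)) : BLe Gen u (w * s) :=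
  (E.lift_right hu hs h).elim id fun h => (E.ble_mul hs hd).trans h

theorem lift2 (E : ExchSys Gen) {u w s : G} (hu : u ∈ Subgroup.closure Gen) (hs : s ∈ Gen)
    (h : BLe Gen u w)
    (hd : glen Gen (u * s) < glen Gen u) : BLe Gen (u * s) (w * s) :=
  (E.lift_right hu hs h).elim (fun h => (E.mul_ble hs hd).trans h) id

theorem lift3 (E : ExchSys Gen) {u w s : G} (hu : u ∈ Subgroup.closure Gen) (hs : s ∈ Gen)
    (h : BLe Gen u w)
    (hd : glen Gen (w * s) < glen Gen w) : BLe Gen (u * s) w :=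
  (E.lift_left hu hs h).elim id fun h => h.trans (E.mul_ble hs hd)

theorem lift1' (E : ExchSys Gen) {u w s : G} (hu : u ∈ Subgroup.closure Gen) (hs : s ∈ Gen)
    (h : BLe Gen u w)
    (hd : glen Gen u < glen Gen (s * u)) : BLe Gen u (s * w) := by
  have h1 := E.lift1 (Subgroup.inv_mem _ hu) hs (h.inv' E hu)
    (by rwa [← E.glen_left hu hs, E.glen_inv hu])
  simpa [E.inv_gen hs] using h1.inv' E (Subgroup.inv_mem _ hu)

theorem lift2' (E : ExchSys Gen) {u w s : G} (hu : u ∈ Subgroup.closure Gen) (hs : s ∈ Gen)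
    (h : BLe Gen u w)
    (hd : glen Gen (s * u) < glen Gen u) : BLe Gen (s * u) (s * w) := by
  have h1 := E.lift2 (Subgroup.inv_mem _ hu) hs (h.inv' E hu)
    (by rwa [← E.glen_left hu hs, E.glen_inv hu])
  simpa [E.inv_gen hs] using h1.inv' E (E.mul_mem_right (Subgroup.inv_mem _ hu) hs)

theorem lift3' (E : ExchSys Gen) {u w s : G} (hu : u ∈ Subgroup.closure Gen) (hs : s ∈ Gen)
    (h : BLe Gen u w)
    (hd : glen Gen (s * w) < glen Gen w) : BLe Gen (s * u) w := by
  have hw := h.mem hu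
  have h1 := E.lift3 (Subgroup.inv_mem _ hu) hs (h.inv' E hu)
    (by rwa [← E.glen_left hw hs, E.glen_inv hw])
  simpa [E.inv_gen hs] using h1.inv' E (E.mul_mem_right (Subgroup.inv_mem _ hu) hs)

theorem one_ble (E : ExchSys Gen) {w : G} (hw : w ∈ Subgroup.closure Gen) : BLe Gen 1 w := by
  induction hk : glen Gen w using Nat.strong_induction_on generalizing w with
  | _ k ih =>
  by_cases h1 : w = 1
  · rw [h1]; exact BLe.refl _
  · obtain ⟨s, hs, hd⟩ := E.exists_descent hw h1
    exact (ih _ (hk ▸ hd) (E.mul_mem_right hw hs) rfl).trans (E.mul_ble hs hd)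

/-- A right descent of `w` is below `w`. -/
theorem descent_ble (E : ExchSys Gen) {w s : G} (hw : w ∈ Subgroup.closure Gen) (hs : s ∈ Gen)
    (hd : glen Gen (w * s) < glen Gen w) : BLe Gen s w := by
  simpa using E.lift3 (Subgroup.one_mem _) hs (E.one_ble hw) hd

/-- Standard parabolic subgroups are lower sets of the Bruhat order. -/
theorem ble_parabolic (E : ExchSys Gen) {J : Set G} (hJ : J ⊆ Gen) {u w : G} (h : BLe Gen u w)
    (hw : w ∈ Subgroup.closure J) : u ∈ Subgroup.closure J := by
  induction h using Relation.ReflTransGen.head_induction_on with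
  | refl => exact hw
  | head h1 _ ih =>
    obtain ⟨t, ht, rfl, hlt⟩ := h1
    have e : ∀ a : G, a * t * t = a := fun a => by rw [mul_assoc, E.refl_sq ht, mul_one]
    have h2 := E.exch_parabolic hJ ih ht (by rwa [e])
    rwa [e] at h2

end ExchSys

end Generic

/-! ### The operation on involutions -/

section Op

variable {G : Type*} [Group G] {Gen : Set G}

/-- The involutions of the group generated by `Gen`, the identity included. -/
def IsInv (Gen : Set G) (w : G) : Prop := w ∈ Subgroup.closure Gen ∧ w * w = 1

open Classical in
/-- The right action `w · s̲` of a generator on involutions. -/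
noncomputable def op (w s : G) : G := if s * w * s = w then w * s else s * w * s

theorem op_cases (w s : G) :
    (s * w * s = w ∧ op w s = w * s) ∨ (s * w * s ≠ w ∧ op w s = s * w * s) := by
  unfold op
  by_cases h : s * w * s = w
  · left; simp [h]
  · right; simp [h]

theorem op_mem {J : Set G} {w s : G} (hw : w ∈ Subgroup.closure J) (hs : s ∈ J) :
    op w s ∈ Subgroup.closure J := by
  have hs' := Subgroup.subset_closure hs
  rcases op_cases w s with ⟨_, h⟩ | ⟨_, h⟩ <;> rw [h]
  · exact Subgroup.mul_mem _ hw hs'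
  · exact Subgroup.mul_mem _ (Subgroup.mul_mem _ hs' hw) hs'

/-- Conjugation by `s` fixes `w` exactly when `s` and `w` commute. -/
theorem conj_eq_iff {w s : G} (hs : s * s = 1) : s * w * s = w ↔ s * w = w * s := by
  constructor
  · intro h
    calc s * w = s * w * (s * s) := by rw [hs, mul_one]
      _ = s * w * s * s := by group
      _ = w * s := by rw [h]
  · intro h
    rw [h, mul_assoc, hs, mul_one]

theorem op_op {w s : G} (hs : s * s = 1) : op (op w s) s = w := by
  rcases op_cases w s with ⟨h, h'⟩ | ⟨h, h'⟩ <;> rw [h'] <;>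
    rcases op_cases (_ : G) s with ⟨k, k'⟩ | ⟨k, k'⟩ <;> rw [k']
  · rw [mul_assoc, hs, mul_one]
  · exfalso; apply k
    rw [conj_eq_iff hs] at h ⊢
    rw [← mul_assoc, h]
  · exfalso; apply h
    calc s * w * s = s * (s * w * s) * s := k.symm
      _ = (s * s) * w * (s * s) := by group
      _ = w := by rw [hs]; group
  · calc s * (s * w * s) * s = (s * s) * w * (s * s) := by group
      _ = w := by rw [hs]; group

theorem IsInv.op' (E : ExchSys Gen) {w s : G} (hw : IsInv Gen w) (hs : s ∈ Gen) :
    IsInv Gen (op w s) := by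
  refine ⟨op_mem hw.1 hs, ?_⟩
  have hss := E.sq s hs
  rcases op_cases w s with ⟨h, h'⟩ | ⟨h, h'⟩ <;> rw [h']
  · rw [conj_eq_iff hss] at h
    calc w * s * (w * s) = w * (s * w) * s := by group
      _ = (w * w) * (s * s) := by rw [h]; group
      _ = 1 := by rw [hw.2, hss, mul_one]
  · calc s * w * s * (s * w * s) = s * w * (s * s) * w * s := by group
      _ = s * (w * w) * s := by rw [hss]; group
      _ = 1 := by rw [hw.2, mul_one, hss]

theorem IsInv.one : IsInv Gen (1 : G) := ⟨Subgroup.one_mem _, by simp⟩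

theorem IsInv.gen (E : ExchSys Gen) {s : G} (hs : s ∈ Gen) : IsInv Gen s :=
    ⟨E.mem_gen hs, E.sq s hs⟩

namespace ExchSys

theorem inv_desc (E : ExchSys Gen) {w s : G} (hw : IsInv Gen w) (hs : s ∈ Gen) :
    glen Gen (s * w) = glen Gen (w * s) := by
  rw [E.glen_left hw.1 hs, inv_eq_of_mul_eq_one_left hw.2]

theorem ble_mul_left (E : ExchSys Gen) {u s : G} (hu : u ∈ Subgroup.closure Gen) (hs : s ∈ Gen)
    (h : glen Gen u < glen Gen (s * u)) : BLe Gen u (s * u) := by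
  have h1 := E.ble_mul hs (u := u⁻¹) (by rwa [← E.glen_left hu hs, E.glen_inv hu])
  simpa [E.inv_gen hs] using h1.inv' E (Subgroup.inv_mem _ hu)

theorem op_up_comm (E : ExchSys Gen) {w s : G} (hw : IsInv Gen w) (hs : s ∈ Gen)
    (hd : glen Gen w < glen Gen (w * s)) (h : s * w * s = w) :
    op w s = w * s ∧ glen Gen (op w s) = glen Gen w + 1 := by
  rcases op_cases w s with ⟨_, h'⟩ | ⟨h2, h'⟩
  · have := E.glen_mul hw.1 hs
    rw [h']; exact ⟨rfl, by omega⟩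
  · exact absurd h h2

theorem op_up_conj (E : ExchSys Gen) {w s : G} (hw : IsInv Gen w) (hs : s ∈ Gen)
    (hd : glen Gen w < glen Gen (w * s)) (h : s * w * s ≠ w) :
    op w s = s * w * s ∧ glen Gen (op w s) = glen Gen w + 2 := by
  rcases op_cases w s with ⟨h2, h'⟩ | ⟨_, h'⟩
  · exact absurd h2 h
  · rw [h']
    exact ⟨rfl, E.glen_conj hw.1 hs hd (by rwa [E.inv_desc hw hs]) h⟩

/-- If `s` is not a descent of the involution `w`, then `w · s̲` is above `w` and has `s` as a
descent. -/
theorem op_up (E : ExchSys Gen) {w s : G} (hw : IsInv Gen w) (hs : s ∈ Gen)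
    (hd : glen Gen w < glen Gen (w * s)) :
    BLe Gen w (op w s) ∧ glen Gen (op w s * s) < glen Gen (op w s) := by
  by_cases h : s * w * s = w
  · obtain ⟨h1, _⟩ := E.op_up_comm hw hs hd h
    rw [h1]
    refine ⟨E.ble_mul hs hd, ?_⟩
    rwa [E.cancel_right hs]
  · obtain ⟨h1, h2⟩ := E.op_up_conj hw hs hd h
    have h3 := E.inv_desc hw hs
    have h4 := E.glen_mul hw.1 hs
    rw [h1] at h2 ⊢
    constructor
    · refine (E.ble_mul hs hd).trans ?_
      rw [mul_assoc]
      exact E.ble_mul_left (E.mul_mem_right hw.1 hs) hs (by rw [← mul_assoc]; omega)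
    · rw [E.cancel_right hs]; omega

/-- If `s` is a descent of the involution `w`, then it is not one of `w · s̲`. -/
theorem op_down (E : ExchSys Gen) {w s : G} (hw : IsInv Gen w) (hs : s ∈ Gen)
    (hd : glen Gen (w * s) < glen Gen w) :
    glen Gen (op w s) < glen Gen (op w s * s) := by
  rcases op_cases w s with ⟨h, h'⟩ | ⟨h, h'⟩ <;> rw [h'] <;> rw [E.cancel_right hs]
  · exact hd
  · have h3 := E.inv_desc hw hs
    have h4 := E.glen_mul (E.mul_mem_left hw.1 hs) hs
    by_contra hcon
    have := E.glen_conj (w := s * w) (s := s) (E.mul_mem_left hw.1 hs) hs (by omega)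
      (by rw [E.cancel_left hs]; omega) (by
        rw [E.cancel_left hs]; intro k
        exact h ((conj_eq_iff (E.sq s hs)).mpr k.symm))
    rw [E.cancel_left hs] at this
    omega

theorem op_down_ble (E : ExchSys Gen) {w s : G} (hw : IsInv Gen w) (hs : s ∈ Gen)
    (hd : glen Gen (w * s) < glen Gen w) : BLe Gen (op w s) w := by
  have := (E.op_up (hw.op' E hs) hs (E.op_down hw hs hd)).1
  rwa [op_op (E.sq s hs)] at this

theorem op_down_ne (E : ExchSys Gen) {w s : G} (hs : s ∈ Gen) (hw : IsInv Gen w)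
    (hd : glen Gen (w * s) < glen Gen w) : op w s ≠ w := by
  intro h
  have := E.op_down hw hs hd
  rw [h] at this
  omega

/-- The lifting property for involutions. -/
theorem ble_op (E : ExchSys Gen) {u w s : G} (hu : IsInv Gen u) (hs : s ∈ Gen)
    (hd : glen Gen u < glen Gen (u * s)) (h : BLe Gen u w) : BLe Gen u (op w s) := by
  have h1 := E.lift1 hu.1 hs h hd
  rcases op_cases w s with ⟨_, h'⟩ | ⟨_, h'⟩ <;> rw [h']
  · exact h1
  · rw [mul_assoc]
    exact E.lift1' hu.1 hs h1 (by rwa [E.inv_desc hu hs])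

theorem op_ble (E : ExchSys Gen) {u w s : G} (hu : IsInv Gen u) (hw : IsInv Gen w) (hs : s ∈ Gen)
    (hd : glen Gen (w * s) < glen Gen w) (h : BLe Gen u w) : BLe Gen (op u s) w := by
  have h1 := E.lift3 hu.1 hs h hd
  rcases op_cases u s with ⟨_, h'⟩ | ⟨_, h'⟩ <;> rw [h']
  · exact h1
  · rw [mul_assoc]
    exact E.lift3' (E.mul_mem_right hu.1 hs) hs h1 (by rwa [E.inv_desc hw hs])

theorem op_ble_op_down (E : ExchSys Gen) {u w s : G} (hu : IsInv Gen u) (hs : s ∈ Gen)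
    (hdu : glen Gen (u * s) < glen Gen u) (h : BLe Gen u w) : BLe Gen (op u s) (op w s) :=
  E.ble_op (hu.op' E hs) hs (E.op_down hu hs hdu) ((E.op_down_ble hu hs hdu).trans h)

theorem op_ble_op_up (E : ExchSys Gen) {u w s : G} (hu : IsInv Gen u) (hw : IsInv Gen w)
    (hs : s ∈ Gen) (hdw : glen Gen w < glen Gen (w * s)) (h : BLe Gen u w) :
    BLe Gen (op u s) (op w s) :=
  E.op_ble hu (hw.op' E hs) hs (E.op_up hw hs hdw).2 (h.trans (E.op_up hw hs hdw).1)

end ExchSys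

/-! ### Boolean involutions are the values of words without repetition -/

/-- The value of the word `l` under the action on involutions, starting at the identity. -/
noncomputable def inw (l : List G) : G := l.foldl op 1

theorem inw_nil : inw ([] : List G) = 1 := rfl

theorem inw_snoc (l : List G) (s : G) : inw (l ++ [s]) = op (inw l) s := by simp [inw]

theorem inw_mem {J : Set G} {l : List G} (hl : ∀ x ∈ l, x ∈ J) :
    inw l ∈ Subgroup.closure J := by
  induction l using List.reverseRecOn with
  | nil => exact Subgroup.one_mem _
  | append_singleton l s ih =>
    rw [inw_snoc]
    exact op_mem (ih fun x hx => hl x (by simp [hx])) (hl s (by simp))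

theorem inw_isInv (E : ExchSys Gen) {l : List G} (hl : ∀ x ∈ l, x ∈ Gen) : IsInv Gen (inw l) := by
  induction l using List.reverseRecOn with
  | nil => exact IsInv.one
  | append_singleton l s ih =>
    rw [inw_snoc]
    exact (ih fun x hx => hl x (by simp [hx])).op' E (hl s (by simp))

theorem nodup_snoc {α : Type*} {l : List α} {s : α} : (l ++ [s]).Nodup ↔ l.Nodup ∧ s ∉ l := by
  simp [List.nodup_append]
  intro _
  exact ⟨fun h k => h s k rfl, fun h x hx k => h (k ▸ hx)⟩

theorem inw_up (E : ExchSys Gen) {l : List G} {s : G} (hl : ∀ x ∈ l, x ∈ Gen) (hs : s ∈ Gen)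
    (hsl : s ∉ l) : glen Gen (inw l) < glen Gen (inw l * s) :=
  E.glen_lt_of_not_mem (J := {x | x ∈ l}) hl hs hsl (inw_mem fun _ hx => hx)

/-- Every letter of a word without repetition lies below its value. -/
theorem letter_ble (E : ExchSys Gen) {l : List G} (hl : ∀ x ∈ l, x ∈ Gen) (hn : l.Nodup)
    {s : G} (hs : s ∈ l) : BLe Gen s (inw l) := by
  induction l using List.reverseRecOn with
  | nil => simp at hs
  | append_singleton l x ih =>
    have hl' : ∀ x ∈ l, x ∈ Gen := fun x hx => hl x (by simp [hx])
    have hx := hl x (by simp)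
    rw [nodup_snoc] at hn
    have hup := E.op_up (inw_isInv E hl') hx (inw_up E hl' hx hn.2)
    rw [inw_snoc]
    rcases List.mem_append.mp hs with h | h
    · exact (ih hl' hn.1 h).trans hup.1
    · rw [List.mem_singleton.mp h]
      exact E.descent_ble (op_mem (inw_mem hl') hx) hx hup.2

/-- A Boolean involution is the value of a word without repetition. Going down from `w` along
descents, each `v` in its ideal has such a word: if `s` is a descent of `v` and `l` a word for `v
· s̲`, then `l ++ [s]` is a word for `v`. The letter `s` is new because the Boolean ideal has an
atom below `v` but not below `v · s̲`. The atom is a generator, and by the lifting property this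
generator is `s`. -/
theorem exists_word_of_genBoolean (E : ExchSys Gen) {w : G} (hw : IsInv Gen w)
    (hb : genBoolean Gen w) : ∃ l : List G, (∀ x ∈ l, x ∈ Gen) ∧ l.Nodup ∧ inw l = w := by
  obtain ⟨m, f, hf⟩ := hb
  have key : ∀ k v, glen Gen v = k → IsInv Gen v → genBruhatLE Gen v w →
      ∃ l : List G, (∀ x ∈ l, x ∈ Gen) ∧ l.Nodup ∧ inw l = v := by
    intro k
    induction k using Nat.strong_induction_on with
    | _ k ih =>
    intro v hk hv hvw
    by_cases h1 : v = 1
    · exact ⟨[], by simp, by simp, h1.symm⟩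
    obtain ⟨s, hs, hd⟩ := E.exists_descent hv.1 h1
    have hle := E.op_down_ble hv hs hd
    have hv' := hv.op' E hs
    have hvw' : genBruhatLE Gen (op v s) w :=
      (genBruhatLE_iff _ _).2 (hle.trans ((genBruhatLE_iff _ _).1 hvw))
    have hlt : glen Gen (op v s) < glen Gen v := by
      rcases hle.eq_or_lt with h | h
      · exact absurd h (E.op_down_ne hs hv hd)
      · exact h
    obtain ⟨l, hl, hn, hlv⟩ := ih _ (hk ▸ hlt) _ rfl hv' hvw'
    -- It remains to see that `s` is not below `v · s̲`, hence not a letter of `l`.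
    have hsv : ¬ BLe Gen s (op v s) := by
      have hsub : f ⟨op v s, hv'.1, hv'.2, hvw'⟩ ⊆ f ⟨v, hv.1, hv.2, hvw⟩ :=
        (hf _ _).1 ((genBruhatLE_iff _ _).2 hle)
      have hnsub : ¬ f ⟨v, hv.1, hv.2, hvw⟩ ⊆ f ⟨op v s, hv'.1, hv'.2, hvw'⟩ := by
        intro h
        have := ((genBruhatLE_iff _ _).1 ((hf _ _).2 h)).antisymm hle
        exact E.op_down_ne hs hv hd this.symm
      obtain ⟨x, hx, hx'⟩ := Finset.not_subset.1 hnsub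
      -- `p` is an atom of the ideal of `w` which is below `v` but not below `v · s̲`.
      obtain ⟨p, hp⟩ := f.surjective {x}
      have hpv : BLe Gen p.1 v :=
        (genBruhatLE_iff _ _).1 ((hf p ⟨v, hv.1, hv.2, hvw⟩).2 (by rw [hp]; simpa using hx))
      have hpv' : ¬ BLe Gen p.1 (op v s) := by
        intro h
        have := (hf p ⟨op v s, hv'.1, hv'.2, hvw'⟩).1 ((genBruhatLE_iff _ _).2 h)
        rw [hp] at this
        exact hx' (by simpa using this)
      have hp1 : p.1 ≠ 1 := fun h => hpv' (by rw [h]; exact E.one_ble hv'.1)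
      obtain ⟨r, hr, hrd⟩ := E.exists_descent p.2.1 hp1
      have hrp := E.descent_ble p.2.1 hr hrd
      have hri := IsInv.gen E hr
      have hrw : genBruhatLE Gen r w :=
        (genBruhatLE_iff _ _).2 (hrp.trans ((genBruhatLE_iff _ _).1 p.2.2.2))
      have hrsub := (hf ⟨r, hri.1, hri.2, hrw⟩ p).1 ((genBruhatLE_iff _ _).2 hrp)
      rw [hp, Finset.subset_singleton_iff] at hrsub
      have hrp' : r = p.1 := by
        rcases hrsub with h | h
        · exfalso
          have h1i : IsInv Gen (1 : G) := IsInv.one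
          have h1w : genBruhatLE Gen (1 : G) w := (genBruhatLE_iff _ _).2 (E.one_ble hw.1)
          have h2 := (hf ⟨r, hri.1, hri.2, hrw⟩
            ⟨1, h1i.1, h1i.2, h1w⟩).2 (by rw [h]; simp)
          have h3 := ((genBruhatLE_iff _ _).1 h2).antisymm (E.one_ble hri.1)
          have h4 := E.glen_gen hr
          rw [show r = 1 from h3, E.glen_one] at h4
          omega
        · rw [← hp] at h
          exact congrArg Subtype.val (f.injective h)
      rw [← hrp'] at hpv hpv'
      by_cases hrs : r = s
      · rwa [← hrs] at hpv' ⊢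
      · exfalso
        refine hpv' (E.ble_op hri hs ?_ hpv)
        exact E.glen_lt_of_not_mem (J := {r}) (by simpa using hr) hs
          (fun h => hrs (Set.mem_singleton_iff.1 h).symm)
          (Subgroup.subset_closure (Set.mem_singleton r))
    have hsl : s ∉ l := fun h => hsv (hlv ▸ letter_ble E hl hn h)
    refine ⟨l ++ [s], ?_, nodup_snoc.2 ⟨hn, hsl⟩, ?_⟩
    · intro x hx
      rcases List.mem_append.mp hx with h | h
      · exact hl x h
      · rw [List.mem_singleton.mp h]; exact hs
    · rw [inw_snoc, hlv, op_op (E.sq s hs)]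
  exact key _ w rfl hw ((genBruhatLE_iff _ _).2 (BLe.refl _))

open Classical in
/-- The subword of `l` formed by the letters satisfying `p`. -/
noncomputable def sub {α : Type*} (l : List α) (p : α → Prop) : List α :=
    l.filter fun x => decide (p x)

theorem mem_sub {α : Type*} {l : List α} {p : α → Prop} {x : α} : x ∈ sub l p ↔ x ∈ l ∧ p x := by
  simp [sub]

theorem sub_nodup {α : Type*} {l : List α} (p : α → Prop) (h : l.Nodup) : (sub l p).Nodup :=
    h.filter _

theorem sub_congr {α : Type*} {l : List α} {p q : α → Prop} (h : ∀ x ∈ l, p x ↔ q x) :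
    sub l p = sub l q := by
  apply List.filter_congr
  intro x hx
  simp [h x hx]

theorem sub_snoc_pos {α : Type*} {l : List α} {s : α} {p : α → Prop} (h : p s) :
    sub (l ++ [s]) p = sub l p ++ [s] := by simp [sub, h]

theorem sub_snoc_neg {α : Type*} {l : List α} {s : α} {p : α → Prop} (h : ¬ p s) :
    sub (l ++ [s]) p = sub l p := by simp [sub, h]

/-- For subwords of a word without repetition, the Bruhat order of the values is the inclusion of
the sets of letters. -/
theorem sub_ble_iff (E : ExchSys Gen) {l : List G} (hl : ∀ x ∈ l, x ∈ Gen) (hn : l.Nodup)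
    (p q : G → Prop) :
    BLe Gen (inw (sub l p)) (inw (sub l q)) ↔ ∀ x ∈ l, p x → q x := by
  have hsub : ∀ (l : List G), (∀ x ∈ l, x ∈ Gen) → ∀ p : G → Prop, ∀ x ∈ sub l p, x ∈ Gen :=
    fun l hl p x hx => hl x (mem_sub.1 hx).1
  constructor
  · intro h x hx hpx
    have h1 : BLe Gen x (inw (sub l q)) :=
      (letter_ble E (hsub l hl p) (sub_nodup p hn) (mem_sub.2 ⟨hx, hpx⟩)).trans h
    have h2 := E.ble_parabolic (J := {x | x ∈ sub l q}) (hsub l hl q) h1 (inw_mem fun _ hx => hx)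
    exact (mem_sub.1 (E.gen_mem_parabolic (hsub l hl q) (hl x hx) h2)).2
  · intro h
    induction l using List.reverseRecOn with
    | nil => exact BLe.refl _
    | append_singleton l s ih =>
      have hl' : ∀ x ∈ l, x ∈ Gen := fun x hx => hl x (by simp [hx])
      have hs := hl s (by simp)
      rw [nodup_snoc] at hn
      have ih' := ih hl' hn.1 fun x hx => h x (by simp [hx])
      have hup := inw_up E (hsub l hl' q) hs fun hh => hn.2 (mem_sub.1 hh).1
      have hi := fun p => inw_isInv E (hsub l hl' p)
      by_cases hp : p s
      · have hq := h s (by simp) hp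
        rw [sub_snoc_pos hp, sub_snoc_pos hq, inw_snoc, inw_snoc]
        exact E.op_ble_op_up (hi p) (hi q) hs hup ih'
      · rw [sub_snoc_neg hp]
        by_cases hq : q s
        · rw [sub_snoc_pos hq, inw_snoc]
          exact ih'.trans (E.op_up (hi q) hs hup).1
        · rwa [sub_snoc_neg hq]

/-- The subword property: the involutions below the value of a word without repetition are the
values of its subwords. -/
theorem exists_sub (E : ExchSys Gen) {l : List G} (hl : ∀ x ∈ l, x ∈ Gen) (hn : l.Nodup)
    {u : G} (hu : IsInv Gen u) (h : BLe Gen u (inw l)) : ∃ p : G → Prop, u = inw (sub l p) := by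
  induction l using List.reverseRecOn generalizing u with
  | nil => exact ⟨fun _ => True, h.antisymm (E.one_ble hu.1)⟩
  | append_singleton l s ih =>
    have hl' : ∀ x ∈ l, x ∈ Gen := fun x hx => hl x (by simp [hx])
    have hs := hl s (by simp)
    rw [nodup_snoc] at hn
    rw [inw_snoc] at h
    rcases E.glen_mul hu.1 hs with hd | hd
    · have h1 := E.ble_op hu hs (by omega) h
      rw [op_op (E.sq s hs)] at h1
      obtain ⟨p, rfl⟩ := ih hl' hn.1 hu h1
      refine ⟨fun x => p x ∧ x ≠ s, ?_⟩
      rw [sub_snoc_neg (by simp)]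
      congr 1
      exact sub_congr fun x hx => by
        have : x ≠ s := fun h => hn.2 (h ▸ hx)
        simp [this]
    · have h1 := E.op_ble_op_down hu hs (by omega) h
      rw [op_op (E.sq s hs)] at h1
      obtain ⟨p, hp⟩ := ih hl' hn.1 (hu.op' E hs) h1
      refine ⟨fun x => p x ∨ x = s, ?_⟩
      rw [sub_snoc_pos (by simp), inw_snoc, ← op_op (w := u) (E.sq s hs), hp]
      congr 2
      exact sub_congr fun x hx => by
        have : x ≠ s := fun h => hn.2 (h ▸ hx)
        simp [this]

/-- The value of a word without repetition is Boolean: its ideal is the lattice of the subsets of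
the set of positions in the word. -/
theorem genBoolean_inw (E : ExchSys Gen) {l : List G} (hl : ∀ x ∈ l, x ∈ Gen) (hn : l.Nodup) :
    genBoolean Gen (inw l) := by
  have hsub : ∀ p : G → Prop, ∀ x ∈ sub l p, x ∈ Gen := fun p x hx => hl x (mem_sub.1 hx).1
  have htop : inw l = inw (sub l fun _ => True) := by simp [sub]
  let P : Finset (Fin l.length) → G → Prop := fun K x => ∃ i ∈ K, l.get i = x
  have hP : ∀ K i, P K (l.get i) ↔ i ∈ K := by
    intro K i
    constructor
    · rintro ⟨j, hj, h⟩
      rwa [← (List.nodup_iff_injective_get.1 hn) h]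
    · exact fun h => ⟨i, h, rfl⟩
  have hPle : ∀ K L, BLe Gen (inw (sub l (P K))) (inw (sub l (P L))) ↔ K ⊆ L := by
    intro K L
    rw [sub_ble_iff E hl hn]
    constructor
    · intro h i hi
      exact (hP L i).1 (h _ (l.get_mem i) ((hP K i).2 hi))
    · rintro h x hx ⟨i, hi, hix⟩
      exact ⟨i, h hi, hix⟩
  let Φ : Finset (Fin l.length) →
      {u : G // u ∈ Subgroup.closure Gen ∧ u * u = 1 ∧ genBruhatLE Gen u (inw l)} := fun K =>
    ⟨inw (sub l (P K)), (inw_isInv E (hsub _)).1, (inw_isInv E (hsub _)).2, by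
      rw [genBruhatLE_iff, htop, sub_ble_iff E hl hn]; simp⟩
  have hΦ : Function.Bijective Φ := by
    constructor
    · intro K L h
      have h' : inw (sub l (P K)) = inw (sub l (P L)) := congrArg Subtype.val h
      apply Finset.Subset.antisymm
      · rw [← hPle, h']; exact BLe.refl _
      · rw [← hPle, h']; exact BLe.refl _
    · rintro ⟨u, h1, h2, h3⟩
      obtain ⟨p, rfl⟩ := exists_sub E hl hn ⟨h1, h2⟩ ((genBruhatLE_iff _ _).1 h3)
      classical
      refine ⟨Finset.univ.filter fun i => p (l.get i), Subtype.ext ?_⟩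
      change inw (sub l _) = _
      congr 1
      apply sub_congr
      intro x hx
      obtain ⟨i, rfl⟩ := List.get_of_mem hx
      rw [hP]; simp
  refine ⟨l.length, (Equiv.ofBijective Φ hΦ).symm, fun a b => ?_⟩
  obtain ⟨K, rfl⟩ := hΦ.2 a
  obtain ⟨L, rfl⟩ := hΦ.2 b
  rw [Equiv.ofBijective_symm_apply_apply, Equiv.ofBijective_symm_apply_apply, genBruhatLE_iff]
  exact hPle K L

/-- The Boolean involutions are the values of the words without repeated letters. -/
theorem boolean_iff (E : ExchSys Gen) (w : G) :
    (w ∈ Subgroup.closure Gen ∧ w * w = 1 ∧ genBoolean Gen w) ↔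
      ∃ l : List G, (∀ x ∈ l, x ∈ Gen) ∧ l.Nodup ∧ inw l = w := by
  constructor
  · rintro ⟨h1, h2, h3⟩
    exact exists_word_of_genBoolean E ⟨h1, h2⟩ h3
  · rintro ⟨l, hl, hn, rfl⟩
    exact ⟨(inw_isInv E hl).1, (inw_isInv E hl).2, genBoolean_inw E hl hn⟩

end Op

/-! ### Standard parabolic subgroups of a Coxeter system -/

section Instance

variable {n : ℕ} {W : Type*} [Group W] {M : CoxeterMatrix (Fin n)} (cs : CoxeterSystem M W)

theorem exists_indices {i : ℕ} (l : List W) (hl : ∀ x ∈ l, x ∈ parabGen cs i) :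
    ∃ ω : List (Fin n), (∀ b ∈ ω, (b : ℕ) < i) ∧ l = ω.map cs.simple := by
  induction l with
  | nil => exact ⟨[], by simp, rfl⟩
  | cons x l ih =>
    obtain ⟨ω, hω, rfl⟩ := ih fun y hy => hl y (by simp [hy])
    obtain ⟨b, hb, rfl⟩ := hl x (by simp)
    exact ⟨b :: ω, by simpa [hb] using hω, by simp⟩

theorem map_simple_mem {i : ℕ} {ω : List (Fin n)} (hω : ∀ b ∈ ω, (b : ℕ) < i) :
    ∀ x ∈ ω.map cs.simple, x ∈ parabGen cs i := by
  intro x hx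
  obtain ⟨b, hb, rfl⟩ := List.mem_map.1 hx
  exact ⟨b, hω b hb, rfl⟩

theorem parab_sq {i : ℕ} : ∀ s ∈ parabGen cs i, s * s = 1 := by
  rintro _ ⟨b, _, rfl⟩
  exact cs.simple_mul_simple_self b

/-- Every word in the generators of a standard parabolic subgroup has a reduced rewriting in the
same generators. -/
theorem exists_reduced {i : ℕ} (ω : List (Fin n)) (hω : ∀ b ∈ ω, (b : ℕ) < i) :
    ∃ ω' : List (Fin n), (∀ b ∈ ω', (b : ℕ) < i) ∧ cs.wordProd ω' = cs.wordProd ω ∧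
      ω'.length = cs.length (cs.wordProd ω) := by
  induction ω using List.reverseRecOn with
  | nil => exact ⟨[], by simp, rfl, by simp⟩
  | append_singleton ω b ih =>
    obtain ⟨ω', h1, h2, h3⟩ := ih fun c hc => hω c (by simp [hc])
    have hp : cs.wordProd (ω ++ [b]) = cs.wordProd ω' * cs.simple b := by
      rw [cs.wordProd_append, h2]; simp
    rw [hp]
    rw [← h2] at h3
    rcases cs.length_mul_simple (cs.wordProd ω') b with h | h
    · refine ⟨ω' ++ [b], ?_, by simp [cs.wordProd_append], by simp [h, h3]⟩
      intro c hc
      rcases List.mem_append.mp hc with hc | hc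
      · exact h1 c hc
      · exact hω c (by simp [List.mem_singleton.mp hc])
    · obtain ⟨j, hj, hje⟩ := strong_exchange cs ω' (cs.isReflection_simple b) (by omega)
      refine ⟨ω'.eraseIdx j, fun c hc => h1 c (List.mem_of_mem_eraseIdx hc), hje.symm, ?_⟩
      have := List.length_eraseIdx_add_one hj
      omega

/-- The length in a standard parabolic subgroup is the length in the whole group. -/
theorem glen_eq_length {i : ℕ} {w : W} (hw : w ∈ Subgroup.closure (parabGen cs i)) :
    glen (parabGen cs i) w = cs.length w := by
  obtain ⟨l, hl, hlen, rfl⟩ := exists_shortest (parab_sq cs) hw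
  obtain ⟨ω, hω, rfl⟩ := exists_indices cs l hl
  obtain ⟨ω', h1, h2, h3⟩ := exists_reduced cs ω hω
  have h4 : (ω'.map cs.simple).prod = (ω.map cs.simple).prod := h2
  have h5 := glen_prod_le (Gen := parabGen cs i) _ (map_simple_mem cs h1)
  have h6 := cs.length_wordProd_le ω
  change glen _ _ = cs.length (cs.wordProd ω)
  rw [h4, List.length_map, h3] at h5
  rw [List.length_map] at hlen
  omega

theorem refl_isReflection {i : ℕ} {t : W} (ht : IsGenReflection (parabGen cs i) t) :
    cs.IsReflection t := by
  obtain ⟨x, _, _, ⟨b, _, rfl⟩, rfl⟩ := ht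
  exact ⟨x, b, rfl⟩

/-- Lengths in a standard parabolic subgroup and in the whole group agree, so the strong exchange
property of the whole group passes to the parabolic subgroup. -/
theorem exchSys_parabGen (i : ℕ) : ExchSys (parabGen cs i) where
  sq := parab_sq cs
  ne w hw t ht := by
    rw [glen_eq_length cs hw, glen_eq_length cs (Subgroup.mul_mem _ hw (refl_mem ht))]
    exact (refl_isReflection cs ht).length_mul_left_ne w
  exch l hl t ht h := by
    have hw := prod_mem_closure l hl
    rw [glen_eq_length cs hw, glen_eq_length cs (Subgroup.mul_mem _ hw (refl_mem ht))] at h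
    obtain ⟨ω, hω, rfl⟩ := exists_indices cs l hl
    obtain ⟨j, hj, hje⟩ := strong_exchange cs ω (refl_isReflection cs ht) h
    refine ⟨j, by simpa using hj, ?_⟩
    rw [List.eraseIdx_map]
    exact hje

end Instance

/-! ### The rank of a Boolean involution -/

section Rank

variable {n : ℕ} {W : Type*} [Group W] {M : CoxeterMatrix (Fin n)} (cs : CoxeterSystem M W)

/-- The space `(w - 1) V` moved by `w` in the geometric representation `V`. -/
noncomputable def moved (w : W) : Submodule ℝ (Fin n → ℝ) :=
  LinearMap.range ((geomRep cs w).toLinearMap - LinearMap.id)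

theorem mem_moved {w : W} {x : Fin n → ℝ} : x ∈ moved cs w ↔ ∃ v, geomRep cs w v - v = x := by
  simp [moved, LinearMap.mem_range]

theorem rep_mul (x y : W) (v : Fin n → ℝ) :
    geomRep cs (x * y) v = geomRep cs x (geomRep cs y v) := by
  rw [map_mul]; rfl

theorem rep_one (v : Fin n → ℝ) : geomRep cs 1 v = v := by
  rw [map_one]; rfl

theorem moved_one : moved cs 1 = ⊥ := by
  rw [eq_bot_iff]
  intro x hx
  obtain ⟨v, rfl⟩ := (mem_moved cs).1 hx
  simp

theorem moved_mul_le (x y : W) : moved cs (x * y) ≤ moved cs x ⊔ moved cs y := by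
  intro z hz
  obtain ⟨v, rfl⟩ := (mem_moved cs).1 hz
  refine Submodule.mem_sup.2 ⟨geomRep cs x (geomRep cs y v) - geomRep cs y v,
    (mem_moved cs).2 ⟨_, rfl⟩, geomRep cs y v - v, (mem_moved cs).2 ⟨_, rfl⟩, ?_⟩
  rw [rep_mul]; abel

theorem moved_conj_le (x t : W) :
    moved cs (x * t * x⁻¹) ≤ (moved cs t).map (geomRep cs x).toLinearMap := by
  intro z hz
  obtain ⟨v, rfl⟩ := (mem_moved cs).1 hz
  refine ⟨geomRep cs t (geomRep cs x⁻¹ v) - geomRep cs x⁻¹ v, (mem_moved cs).2 ⟨_, rfl⟩, ?_⟩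
  simp

theorem finrank_moved_conj_le (x t : W) :
    Module.finrank ℝ (moved cs (x * t * x⁻¹)) ≤ Module.finrank ℝ (moved cs t) :=
  (Submodule.finrank_mono (moved_conj_le cs x t)).trans (Submodule.finrank_map_le _ _)

theorem moved_simple_le (b : Fin n) :
    moved cs (cs.simple b) ≤ Submodule.span ℝ {Pi.single b (1 : ℝ)} := by
  intro z hz
  obtain ⟨v, rfl⟩ := (mem_moved cs).1 hz
  rw [geomRep_simple]
  refine Submodule.mem_span_singleton.2 ⟨-geomForm M b v, ?_⟩
  module

theorem finrank_moved_refl {t : W} (ht : cs.IsReflection t) :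
    Module.finrank ℝ (moved cs t) ≤ 1 := by
  obtain ⟨x, b, rfl⟩ := ht
  refine (finrank_moved_conj_le cs x _).trans ?_
  refine (Submodule.finrank_mono (moved_simple_le cs b)).trans ?_
  exact (finrank_span_le_card _).trans (by simp)

theorem finrank_moved_mul_le (x y : W) : Module.finrank ℝ (moved cs (x * y)) ≤
    Module.finrank ℝ (moved cs x) + Module.finrank ℝ (moved cs y) :=
  (Submodule.finrank_mono (moved_mul_le cs x y)).trans (Submodule.finrank_add_le_finrank_add_finrank _ _)

theorem finrank_moved_prod_le (ts : List W) (hts : ∀ t ∈ ts, cs.IsReflection t) :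
    Module.finrank ℝ (moved cs ts.prod) ≤ ts.length := by
  induction ts with
  | nil => rw [List.prod_nil, moved_one]; simp
  | cons t ts ih =>
    have h1 := ih fun x hx => hts x (by simp [hx])
    have h2 := finrank_moved_refl cs (hts t (by simp))
    have h3 := finrank_moved_mul_le cs t ts.prod
    rw [List.prod_cons, List.length_cons]
    omega

/-- Elements of a parabolic subgroup not involving `s_a` move vectors without changing the
coordinate at `a`. -/
theorem moved_coord {J : Set W} {a : Fin n} (hJ : ∀ x ∈ J, ∃ b, b ≠ a ∧ x = cs.simple b)
    {w : W} (hw : w ∈ Subgroup.closure J) (v : Fin n → ℝ) : geomRep cs w v a = v a := by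
  induction hw using Subgroup.closure_induction generalizing v with
  | mem x hx =>
    obtain ⟨b, hb, rfl⟩ := hJ x hx
    rw [geomRep_simple]
    simp [hb.symm]
  | one => rw [rep_one]
  | mul x y _ _ hx hy => rw [rep_mul, hx, hy]
  | inv x _ hx =>
    rw [← hx (geomRep cs x⁻¹ v), ← rep_mul, mul_inv_cancel, rep_one]

/-- Right multiplication by a generator `s_a` commuting with `w`, where `w` lies in a parabolic
subgroup not involving `s_a`, strictly enlarges the moved space. -/
theorem finrank_moved_comm {J : Set W} {a : Fin n} (hJ : ∀ x ∈ J, ∃ b, b ≠ a ∧ x = cs.simple b)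
    {w : W} (hw : w ∈ Subgroup.closure J) (hc : cs.simple a * w = w * cs.simple a) :
    Module.finrank ℝ (moved cs w) < Module.finrank ℝ (moved cs (w * cs.simple a)) := by
  have hα := geomForm_self M a
  set α : Fin n → ℝ := Pi.single a 1 with hαdef
  have hαa : α a = 1 := by simp [hαdef]
  have hs := geomRep_simple cs a
  have hcoord := moved_coord cs hJ hw
  have hsα : geomRep cs (cs.simple a) α = -α := by
    rw [hs, hα]; module
  -- As `w` commutes with `s_a`, it maps `α` to a multiple of `α`, and the coordinate at `a`
  -- shows that the factor is `1`.
  have hwα : geomRep cs w α = α := by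
    have h1 : geomRep cs (cs.simple a) (geomRep cs w α) = -geomRep cs w α := by
      rw [← rep_mul, hc, rep_mul, hsα, map_neg]
    rw [hs] at h1
    have h2 : (2 : ℝ) • geomRep cs w α = geomForm M a (geomRep cs w α) • α := by
      rw [two_smul]
      nth_rewrite 2 [← neg_neg (geomRep cs w α)]
      rw [← h1]; abel
    have h3 := congrFun h2 a
    simp only [Pi.smul_apply, smul_eq_mul, hcoord, hαa, mul_one] at h3
    rw [← h3] at h2
    exact smul_right_injective _ (two_ne_zero (α := ℝ)) h2
  apply Submodule.finrank_lt_finrank_of_lt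
  rw [SetLike.lt_iff_le_and_exists]
  constructor
  · intro z hz
    obtain ⟨v, rfl⟩ := (mem_moved cs).1 hz
    refine (mem_moved cs).2 ⟨v - (geomForm M a v / 2) • α, ?_⟩
    have h1 : geomRep cs (cs.simple a) (v - (geomForm M a v / 2) • α) =
        v - (geomForm M a v / 2) • α := by
      rw [hs, map_sub, map_smul, hα]
      simp
    rw [rep_mul, h1, map_sub, map_smul, hwα]
    abel
  · refine ⟨geomRep cs (w * cs.simple a) α - α, (mem_moved cs).2 ⟨_, rfl⟩, ?_⟩
    intro h
    obtain ⟨v, hv⟩ := (mem_moved cs).1 h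
    have h1 := congrFun hv a
    rw [rep_mul, hsα, map_neg, hwα] at h1
    simp only [Pi.sub_apply, Pi.neg_apply, hcoord, hαa] at h1
    norm_num at h1

theorem alen_prod_le {Gen : Set W} (ts : List W) (hts : ∀ t ∈ ts, IsGenReflection Gen t) :
    alen Gen ts.prod ≤ ts.length := Nat.sInf_le ⟨ts, hts, rfl, rfl⟩

theorem exists_alen {Gen : Set W} (hG : ∀ s ∈ Gen, s * s = 1) {w : W}
    (hw : w ∈ Subgroup.closure Gen) :
    ∃ ts : List W, (∀ t ∈ ts, IsGenReflection Gen t) ∧ ts.length = alen Gen w ∧ ts.prod = w := by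
  obtain ⟨l, hl, hlw⟩ := exists_word hG hw
  exact Nat.sInf_mem
    (s := {k : ℕ | ∃ ts : List W, (∀ t ∈ ts, IsGenReflection Gen t) ∧ ts.length = k ∧ ts.prod = w})
    ⟨l.length, l, fun t ht => isGenReflection_of_mem (hl t ht), rfl, hlw⟩

theorem alen_mul_le {Gen : Set W} (hG : ∀ s ∈ Gen, s * s = 1) {w s : W}
    (hw : w ∈ Subgroup.closure Gen) (hs : s ∈ Gen) : alen Gen (w * s) ≤ alen Gen w + 1 := by
  obtain ⟨ts, h1, h2, rfl⟩ := exists_alen hG hw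
  have := alen_prod_le (ts ++ [s]) (by
    intro t ht
    rcases List.mem_append.mp ht with h | h
    · exact h1 t h
    · rw [List.mem_singleton.mp h]; exact isGenReflection_of_mem hs)
  simpa [h2] using this

theorem alen_conj_le {Gen : Set W} (hG : ∀ s ∈ Gen, s * s = 1) {w s : W}
    (hw : w ∈ Subgroup.closure Gen) (hs : s ∈ Gen) : alen Gen (s * w * s) ≤ alen Gen w := by
  obtain ⟨ts, h1, h2, rfl⟩ := exists_alen hG hw
  have hinv : s⁻¹ = s := inv_eq_of_mul_eq_one_left (hG s hs)
  have h3 : (ts.map (MulAut.conj s)).prod = s * ts.prod * s := by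
    rw [← map_list_prod, MulAut.conj_apply, hinv]
  have := alen_prod_le (Gen := Gen) (ts.map (MulAut.conj s)) (by
    intro t ht
    obtain ⟨t', ht', rfl⟩ := List.mem_map.1 ht
    exact refl_conj (h1 t' ht') (Subgroup.subset_closure hs))
  rw [h3, List.length_map, h2] at this
  exact this

/-- A reflection moves at most a line, so a product of `k` reflections moves a space of dimension
at most `k`. -/
theorem finrank_moved_le_alen {i : ℕ} {w : W} (hw : w ∈ Subgroup.closure (parabGen cs i)) :
    Module.finrank ℝ (moved cs w) ≤ alen (parabGen cs i) w := by
  obtain ⟨ts, h1, h2, rfl⟩ := exists_alen (parab_sq cs) hw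
  rw [← h2]
  exact finrank_moved_prod_le cs ts fun t ht => refl_isReflection cs (h1 t ht)

/-- The rank of the Boolean involution given by a word without repetition is the length of the
word. A letter acting by conjugation adds `2` to the length and nothing to the absolute length; a
letter acting by multiplication adds `1` to both. That the absolute length does grow is seen on the
dimension of the moved space, whence the first conclusion, the converse of
`finrank_moved_le_alen`. -/
theorem rank_inw {i : ℕ} {l : List W} (hl : ∀ x ∈ l, x ∈ parabGen cs i) (hn : l.Nodup) :
    alen (parabGen cs i) (inw l) ≤ Module.finrank ℝ (moved cs (inw l)) ∧
    glen (parabGen cs i) (inw l) + alen (parabGen cs i) (inw l) = 2 * l.length := by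
  have E := exchSys_parabGen cs i
  induction l using List.reverseRecOn with
  | nil =>
    have h1 : alen (parabGen cs i) (1 : W) ≤ 0 := alen_prod_le (Gen := parabGen cs i) [] (by simp)
    rw [inw_nil, E.glen_one]
    simp only [List.length_nil]
    omega
  | append_singleton l s ih =>
    have hl' : ∀ x ∈ l, x ∈ parabGen cs i := fun x hx => hl x (by simp [hx])
    have hs := hl s (by simp)
    rw [nodup_snoc] at hn
    obtain ⟨ih1, ih2⟩ := ih hl' hn.1
    have hw := inw_isInv E hl'
    have hup := inw_up E hl' hs hn.2
    have hle := finrank_moved_le_alen cs (E.mul_mem_right hw.1 hs)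
    have hss := E.sq s hs
    rw [inw_snoc, List.length_append, List.length_singleton]
    by_cases hc : s * inw l * s = inw l
    · obtain ⟨e1, e2⟩ := E.op_up_comm hw hs hup hc
      rw [e1] at e2 ⊢
      obtain ⟨a, ha, rfl⟩ := id hs
      have h1 := finrank_moved_comm cs (J := {x | x ∈ l}) (a := a) (fun x hx => by
        obtain ⟨b, _, rfl⟩ := hl' x hx
        exact ⟨b, fun h => hn.2 (h ▸ hx), rfl⟩) (inw_mem fun _ hx => hx)
        ((conj_eq_iff hss).1 hc)
      have h2 := alen_mul_le (parab_sq cs) hw.1 hs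
      omega
    · obtain ⟨e1, e2⟩ := E.op_up_conj hw hs hup hc
      have hinv : s⁻¹ = s := E.inv_gen hs
      rw [e1] at e2 ⊢
      have h1 := finrank_moved_conj_le cs s (s * inw l * s)
      have h3 : s * (s * inw l * s) * s⁻¹ = inw l := by
        rw [hinv]
        calc s * (s * inw l * s) * s = (s * s) * inw l * (s * s) := by group
          _ = inw l := by rw [hss]; group
      rw [h3] at h1
      have h2 := alen_conj_le (parab_sq cs) hw.1 hs
      have h4 := finrank_moved_le_alen cs
        (Subgroup.mul_mem _ (E.mul_mem_left hw.1 hs) (E.mem_gen hs))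
      have h5 := finrank_moved_le_alen cs hw.1
      omega

end Rank

/-! ### Decomposition of the set of Boolean involutions -/

section Decomposition

variable {G : Type*} [Group G]

theorem commute_closure {J : Set G} {a : G} (h : ∀ x ∈ J, Commute x a) {u : G}
    (hu : u ∈ Subgroup.closure J) : Commute u a := by
  induction hu using Subgroup.closure_induction with
  | mem x hx => exact h x hx
  | one => exact Commute.one_left a
  | mul x y _ _ hx hy => exact hx.mul_left hy
  | inv x _ hx => exact hx.inv_left

theorem op_of_commute {w s : G} (hs : s * s = 1) (h : Commute w s) : op w s = w * s := by
  rcases op_cases w s with ⟨_, h'⟩ | ⟨h1, _⟩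
  · exact h'
  · exact absurd ((conj_eq_iff hs).2 h.eq.symm) h1

theorem op_commute {w s b : G} (hw : Commute w b) (hs : Commute s b) : Commute (op w s) b := by
  rcases op_cases w s with ⟨_, h'⟩ | ⟨_, h'⟩ <;> rw [h']
  · exact hw.mul_left hs
  · exact (hs.mul_left hw).mul_left hs

theorem eq_of_commute_of_braid {x y : G} (hx : x * x = 1) (hy : y * y = 1)
    (hbr : x * y * x = y * x * y) (hc : x * y = y * x) : x = y := by
  have h1 : x * y * x = y := by rw [hc, mul_assoc, hx, mul_one]
  have h2 : y * x * y = x := by rw [← hc, mul_assoc, hy, mul_one]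
  rw [← h2, ← hbr, h1]

/-- The actions of two commuting generators commute. -/
theorem op_op_comm {w x y : G} (hxy : Commute x y) :
    op (op w x) y = op (op w y) x := by
  have hcc : ∀ z : G, y * (x * z * x) * y = x * (y * z * y) * x := by
    intro z
    calc y * (x * z * x) * y = (y * x) * z * (x * y) := by group
      _ = (x * y) * z * (y * x) := by rw [hxy.eq]
      _ = x * (y * z * y) * x := by group
  have hinj : ∀ s z z' : G, s * z * s = s * z' * s → z = z' := fun s z z' h =>
    mul_left_cancel (mul_right_cancel h)
  have hR : ∀ z : G, y * (z * x) * y = y * z * y * x := by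
    intro z
    calc y * (z * x) * y = y * z * (x * y) := by group
      _ = y * z * y * x := by rw [hxy.eq]; group
  have hR' : ∀ z : G, x * (z * y) * x = x * z * x * y := by
    intro z
    calc x * (z * y) * x = x * z * (y * x) := by group
      _ = x * z * x * y := by rw [← hxy.eq]; group
  have pos : ∀ {z s : G}, s * z * s = z → op z s = z * s := fun h => by
    unfold op; rw [if_pos h]
  have neg : ∀ {z s : G}, s * z * s ≠ z → op z s = s * z * s := fun h => by
    unfold op; rw [if_neg h]
  by_cases h1 : x * w * x = w <;> by_cases h2 : y * w * y = w
  · rw [pos h1, pos h2, pos (by rw [hR, h2]), pos (by rw [hR', h1]), mul_assoc, mul_assoc,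
      hxy.eq]
  · rw [pos h1, neg h2, neg (by rw [hR]; exact fun h => h2 (mul_right_cancel h)),
      pos (by rw [← hcc, h1]), hR]
  · rw [neg h1, pos h2, pos (by rw [hcc, h2]),
      neg (by rw [hR']; exact fun h => h1 (mul_right_cancel h)), hR']
  · rw [neg h1, neg h2, neg (by rw [hcc]; exact fun h => h2 (hinj _ _ _ h)),
      neg (by rw [← hcc]; exact fun h => h1 (hinj _ _ _ h)), hcc]

theorem foldl_op_comm {a : G} (l : List G) (w : G)
    (hl : ∀ x ∈ l, Commute x a) :
    l.foldl op (op w a) = op (l.foldl op w) a := by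
  induction l generalizing w with
  | nil => rfl
  | cons x l ih =>
    rw [List.foldl_cons, List.foldl_cons, op_op_comm (hl x (by simp)).symm]
    exact ih _ fun y hy => hl y (by simp [hy])

theorem inw_append (l m : List G) : inw (l ++ m) = m.foldl op (inw l) := by simp [inw]

theorem inw_move {a : G} (l m : List G) (hm : ∀ x ∈ m, Commute x a) :
    inw (l ++ a :: m) = op (inw (l ++ m)) a := by
  rw [inw_append, inw_append, List.foldl_cons, foldl_op_comm m _ hm]

/-- The values of words without repetition in the letters `J` whose length satisfies `P`. -/
def BSet (J : Set G) (P : ℕ → Prop) : Set G :=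
  {w | ∃ l : List G, (∀ x ∈ l, x ∈ J) ∧ l.Nodup ∧ P l.length ∧ inw l = w}

theorem BSet_mono {J K : Set G} (h : J ⊆ K) (P : ℕ → Prop) : BSet J P ⊆ BSet K P := by
  rintro w ⟨l, hl, hr⟩
  exact ⟨l, fun x hx => h (hl x hx), hr⟩

theorem BSet_mem {J : Set G} {P : ℕ → Prop} {w : G} (h : w ∈ BSet J P) :
    w ∈ Subgroup.closure J := by
  obtain ⟨l, hl, _, _, rfl⟩ := h
  exact inw_mem hl

/-- Conjugation by a generator outside a parabolic subgroup either fixes an element of that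
subgroup or moves it out of the subgroup. -/
theorem ExchSys.conj_eq_of_mem {Gen : Set G} (E : ExchSys Gen) {J : Set G} (hJ : J ⊆ Gen)
    {a x : G} (ha : a ∈ Gen) (haJ : a ∉ J) (hx : x ∈ Subgroup.closure J)
    (hax : a * x * a ∈ Subgroup.closure J) : a * x * a = x := by
  have key : ∀ y ∈ Subgroup.closure J, a * y * a ≠ y →
      glen Gen (a * y * a) = glen Gen y + 2 := by
    intro y hy hne
    have hyG := Subgroup.closure_mono hJ hy
    refine E.glen_conj hyG ha (E.glen_lt_of_not_mem hJ ha haJ hy) ?_ hne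
    rw [E.glen_left hyG ha, ← E.glen_inv hyG]
    exact E.glen_lt_of_not_mem hJ ha haJ (Subgroup.inv_mem _ hy)
  by_contra hne
  have e : a * (a * x * a) * a = x := by
    calc a * (a * x * a) * a = (a * a) * x * (a * a) := by group
      _ = x := by rw [E.sq a ha]; group
  have h1 := key x hx hne
  have h2 := key _ hax (by rw [e]; exact fun h => hne h.symm)
  rw [e] at h2
  omega

/-- The generators `a = s_n`, `b = s_{n-1}`, `c = s_{n-2}`, with `J0`, `J1`, `J2`, `J3` the
generators of `W_n`, `W_{n-1}`, `W_{n-2}`, `W_{n-3}`, and the relations between them. -/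
structure Tail (J0 J1 J2 J3 : Set G) (a b c : G) : Prop where
  E : ExchSys J0
  mem0 : ∀ x, x ∈ J0 ↔ x = a ∨ x ∈ J1
  mem1 : ∀ x, x ∈ J1 ↔ x = b ∨ x ∈ J2
  mem2 : ∀ x, x ∈ J2 ↔ x = c ∨ x ∈ J3
  ha : a ∉ J1
  hb : b ∉ J2
  hc : c ∉ J3
  comm_a : ∀ x ∈ J2, Commute x a
  comm_b : ∀ x ∈ J3, Commute x b
  braid_ab : a * b * a = b * a * b
  braid_bc : b * c * b = c * b * c

namespace Tail

variable {J0 J1 J2 J3 : Set G} {a b c : G}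

theorem sub1 (T : Tail J0 J1 J2 J3 a b c) : J1 ⊆ J0 := fun x hx => (T.mem0 x).2 (Or.inr hx)

theorem sub2 (T : Tail J0 J1 J2 J3 a b c) : J2 ⊆ J1 := fun x hx => (T.mem1 x).2 (Or.inr hx)

theorem sub3 (T : Tail J0 J1 J2 J3 a b c) : J3 ⊆ J2 := fun x hx => (T.mem2 x).2 (Or.inr hx)

theorem a_mem (T : Tail J0 J1 J2 J3 a b c) : a ∈ J0 := (T.mem0 a).2 (Or.inl rfl)

theorem b_mem (T : Tail J0 J1 J2 J3 a b c) : b ∈ J1 := (T.mem1 b).2 (Or.inl rfl)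

theorem c_mem (T : Tail J0 J1 J2 J3 a b c) : c ∈ J2 := (T.mem2 c).2 (Or.inl rfl)

theorem aa (T : Tail J0 J1 J2 J3 a b c) : a * a = 1 := T.E.sq a T.a_mem

theorem bb (T : Tail J0 J1 J2 J3 a b c) : b * b = 1 := T.E.sq b (T.sub1 T.b_mem)

theorem cc (T : Tail J0 J1 J2 J3 a b c) : c * c = 1 := T.E.sq c (T.sub1 (T.sub2 T.c_mem))

theorem ab_ne (T : Tail J0 J1 J2 J3 a b c) : a * b ≠ b * a := fun h =>
  T.ha (eq_of_commute_of_braid T.aa T.bb T.braid_ab h ▸ T.b_mem)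

theorem bc_ne (T : Tail J0 J1 J2 J3 a b c) : b * c ≠ c * b := fun h =>
  T.hb (eq_of_commute_of_braid T.bb T.cc T.braid_bc h ▸ T.c_mem)

theorem a_not_mem (T : Tail J0 J1 J2 J3 a b c) : a ∉ Subgroup.closure J1 := fun h =>
  T.ha (T.E.gen_mem_parabolic T.sub1 T.a_mem h)

/-- `a` is not a descent of elements of `W_{n-1}`. -/
theorem a_up (T : Tail J0 J1 J2 J3 a b c) {v : G} (hv : v ∈ Subgroup.closure J1) :
    glen J0 v < glen J0 (v * a) := T.E.glen_lt_of_not_mem T.sub1 T.a_mem T.ha hv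

/-- The letter `b` acts by conjugation on `u * a`, for if it commuted with `u * a`, then `a b a`
would lie in `W_{n-1}`. -/
theorem phi_eq (T : Tail J0 J1 J2 J3 a b c) {u : G} (hu : u ∈ Subgroup.closure J2) :
    op (op u a) b = b * (u * a) * b := by
  rw [op_of_commute T.aa (commute_closure T.comm_a hu)]
  rcases op_cases (u * a) b with ⟨h, _⟩ | ⟨_, h⟩
  · exfalso
    rw [conj_eq_iff T.bb] at h
    have e : a * b * a = u⁻¹ * b * u := by
      calc a * b * a = u⁻¹ * (u * a * b) * a := by group
        _ = u⁻¹ * b * u * (a * a) := by rw [← h]; group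
        _ = u⁻¹ * b * u := by rw [T.aa, mul_one]
    have hu1 := Subgroup.closure_mono T.sub2 hu
    have hb1 : b ∈ Subgroup.closure J1 := Subgroup.subset_closure T.b_mem
    have h2 := T.E.conj_eq_of_mem T.sub1 T.a_mem T.ha hb1 (by
      rw [e]
      exact Subgroup.mul_mem _ (Subgroup.mul_mem _ (Subgroup.inv_mem _ hu1) hb1) hu1)
    exact T.ab_ne ((conj_eq_iff T.aa).1 h2)
  · exact h

theorem op_a_not_mem (T : Tail J0 J1 J2 J3 a b c) {v : G} (hv : v ∈ Subgroup.closure J1)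
    (hi : v * v = 1) : op v a ∉ Subgroup.closure J1 := by
  intro h
  have h1 := T.a_up h
  have h2 := (T.E.op_up ⟨Subgroup.closure_mono T.sub1 hv, hi⟩ T.a_mem (T.a_up hv)).2
  omega

theorem phi_not_mem (T : Tail J0 J1 J2 J3 a b c) {u : G} (hu : u ∈ Subgroup.closure J2) :
    b * (u * a) * b ∉ Subgroup.closure J1 := by
  intro h
  have hb1 : b ∈ Subgroup.closure J1 := Subgroup.subset_closure T.b_mem
  have hu1 := Subgroup.closure_mono T.sub2 hu
  rw [Subgroup.mul_mem_cancel_right _ hb1, Subgroup.mul_mem_cancel_left _ hb1,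
    Subgroup.mul_mem_cancel_left _ hu1] at h
  exact T.a_not_mem h

/-- An involution given by a word in `J2` containing `c` does not commute with `b`. -/
theorem not_commute_b (T : Tail J0 J1 J2 J3 a b c) {l : List G} (hl : ∀ x ∈ l, x ∈ J2)
    (hn : l.Nodup) (hcl : c ∈ l) : ¬ Commute (inw l) b := by
  induction l using List.reverseRecOn with
  | nil => simp at hcl
  | append_singleton l d ih =>
    intro hcomm
    have hl' : ∀ x ∈ l, x ∈ J2 := fun x hx => hl x (by simp [hx])
    rw [nodup_snoc] at hn
    rw [inw_snoc] at hcomm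
    rcases (T.mem2 d).1 (hl d (by simp)) with rfl | hd
    · have hl3 : ∀ x ∈ l, x ∈ J3 := fun x hx =>
        ((T.mem2 x).1 (hl' x hx)).resolve_left fun h => hn.2 (h ▸ hx)
      have hv := commute_closure T.comm_b (inw_mem hl3)
      rcases op_cases (inw l) d with ⟨_, h⟩ | ⟨h1, h⟩ <;> rw [h] at hcomm
      · have := hv.inv_left.mul_left hcomm
        rw [inv_mul_cancel_left] at this
        exact T.bc_ne this.eq.symm
      · -- `inw l` commutes with `c b c = b c b` and with `b`, hence with `c`.
        set v := inw l with hvdef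
        apply h1
        rw [conj_eq_iff T.cc]
        have h2 : v * (d * b * d) = (d * b * d) * v := by
          have e1 : v * (d * b * d) = d * (d * v * d * b) * d := by
            calc v * (d * b * d) = 1 * v * d * b * d := by group
              _ = d * (d * v * d * b) * d := by rw [← T.cc]; group
          have e2 : (d * b * d) * v = d * (b * (d * v * d)) * d := by
            calc (d * b * d) * v = d * b * d * v * 1 := by group
              _ = d * (b * (d * v * d)) * d := by rw [← T.cc]; group
          rw [e1, e2, hcomm.eq]
        rw [← T.braid_bc] at h2
        have h3 : b * (v * d) * b = b * (d * v) * b := by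
          calc b * (v * d) * b = (b * v) * d * b := by group
            _ = v * (b * d * b) := by rw [← hv.eq]; group
            _ = b * d * (b * v) := by rw [h2]; group
            _ = b * (d * v) * b := by rw [← hv.eq]; group
        exact (mul_left_cancel (mul_right_cancel h3)).symm
    · have hdb := T.comm_b d hd
      have hdd := T.E.sq d (T.sub1 (T.sub2 (T.sub3 hd)))
      have h1 := op_commute hcomm hdb
      rw [op_op hdd] at h1
      refine ih hl' hn.1 ?_ h1
      rcases List.mem_append.mp hcl with h | h
      · exact h
      · exact absurd hd (List.mem_singleton.mp h ▸ T.hc)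

/-- The last two parts of the decomposition of the Boolean involutions do not meet. A common
element would express `a` in `W_{n-1}`, or show that `inw l` commutes with `b`, against
`not_commute_b`. -/
theorem op_ne_phi (T : Tail J0 J1 J2 J3 a b c) {v : G} (hv : v ∈ Subgroup.closure J1)
    {l : List G} (hl : ∀ x ∈ l, x ∈ J2) (hn : l.Nodup) (hcl : c ∈ l) :
    op v a ≠ b * (inw l * a) * b := by
  intro heq
  apply T.not_commute_b hl hn hcl
  have hu := inw_mem hl
  set u := inw l with hudef
  have hua := commute_closure T.comm_a hu
  have hb1 : b ∈ Subgroup.closure J1 := Subgroup.subset_closure T.b_mem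
  have hu1 := Subgroup.closure_mono T.sub2 hu
  have hbub : b * u * b ∈ Subgroup.closure J1 :=
    Subgroup.mul_mem _ (Subgroup.mul_mem _ hb1 hu1) hb1
  rcases op_cases v a with ⟨_, h⟩ | ⟨_, h⟩ <;> rw [h] at heq
  · exfalso
    have e : v * b = b * u * b * a := by
      calc v * b = v * (a * a) * b := by rw [T.aa, mul_one]
        _ = (v * a) * a * b := by group
        _ = b * u * (a * b * a) * b := by rw [heq]; group
        _ = b * u * b * a * (b * b) := by rw [T.braid_ab]; group
        _ = b * u * b * a := by rw [T.bb, mul_one]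
    have h2 : b * u * b * a ∈ Subgroup.closure J1 := e ▸ Subgroup.mul_mem _ hv hb1
    exact T.a_not_mem ((Subgroup.mul_mem_cancel_left _ hbub).1 h2)
  · have e : a * (b * u * b) * a = b * v := by
      calc a * (b * u * b) * a = (b * b) * a * b * u * b * a := by rw [T.bb]; group
        _ = b * (b * a * b) * u * b * a := by group
        _ = b * (a * b) * (a * u) * b * a := by rw [← T.braid_ab]; group
        _ = b * a * (b * (u * a) * b) * a := by rw [← hua.eq]; group
        _ = b * (a * a) * v * (a * a) := by rw [← heq]; group
        _ = b * v := by rw [T.aa]; group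
    have h2 := T.E.conj_eq_of_mem T.sub1 T.a_mem T.ha hbub (by
      rw [e]; exact Subgroup.mul_mem _ hb1 hv)
    rw [conj_eq_iff T.aa] at h2
    have h3 : a * (u * b) * a = a * (b * u) * a := by
      calc a * (u * b) * a = (a * u) * b * a := by group
        _ = u * (a * b * a) := by rw [← hua.eq]; group
        _ = (b * b) * u * b * a * b := by rw [T.braid_ab, T.bb]; group
        _ = b * (b * u * b * a) * b := by group
        _ = (b * a * b) * u * (b * b) := by rw [← h2]; group
        _ = a * b * (a * u) := by rw [← T.braid_ab, T.bb]; group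
        _ = a * (b * u) * a := by rw [← hua.eq]; group
    exact mul_left_cancel (mul_right_cancel h3)

theorem word_c (T : Tail J0 J1 J2 J3 a b c) {l : List G} (hl : ∀ x ∈ l, x ∈ J2) (hcl : c ∉ l) :
    ∀ x ∈ l, x ∈ J3 := fun x hx =>
  ((T.mem2 x).1 (hl x hx)).resolve_left fun h => hcl (h ▸ hx)

/-- A word without repetition in the generators `J2` with the letter `c` has its value outside
`W_{n-3}`, as `c` lies below the value. -/
theorem not_mem_J3 (T : Tail J0 J1 J2 J3 a b c) {l : List G} (hl : ∀ x ∈ l, x ∈ J2)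
    (hn : l.Nodup) (hcl : c ∈ l) : inw l ∉ Subgroup.closure J3 := by
  intro h
  have hl0 : ∀ x ∈ l, x ∈ J0 := fun x hx => T.sub1 (T.sub2 (hl x hx))
  have h30 : J3 ⊆ J0 := fun x hx => T.sub1 (T.sub2 (T.sub3 hx))
  exact T.hc (T.E.gen_mem_parabolic h30 (hl0 c hcl)
    (T.E.ble_parabolic h30 (letter_ble T.E hl0 hn hcl) h))

/-- The Boolean involutions of `W_n`: those of `W_{n-1}`, their images under the action of `a`,
and the elements `b u a b` with `u` in `W_{n-2}` but not in `W_{n-3}`. -/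
theorem decomp (T : Tail J0 J1 J2 J3 a b c) (P : ℕ → Prop) :
    BSet J0 P = BSet J1 P ∪ ((fun v => op v a) '' BSet J1 (fun m => P (m + 1)) ∪
      (fun u => b * (u * a) * b) ''
        (BSet J2 (fun m => P (m + 2)) \ BSet J3 (fun m => P (m + 2)))) := by
  ext w
  constructor
  · rintro ⟨l, hl, hn, hP, rfl⟩
    by_cases hal : a ∈ l
    swap
    · left
      exact ⟨l, fun x hx => ((T.mem0 x).1 (hl x hx)).resolve_left fun h => hal (h ▸ hx),
        hn, hP, rfl⟩
    right
    obtain ⟨l1, l2, rfl⟩ := List.append_of_mem hal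
    have hperm : (l1 ++ a :: l2).Perm (a :: (l1 ++ l2)) := List.perm_middle
    have hn' := List.nodup_cons.1 (hperm.nodup_iff.1 hn)
    have hlen : (l1 ++ a :: l2).length = (l1 ++ l2).length + 1 := by simpa using hperm.length_eq
    have hl1 : ∀ x ∈ l1 ++ l2, x ∈ J1 := fun x hx =>
      ((T.mem0 x).1 (hl x (hperm.mem_iff.2 (by simp [List.mem_append.1 hx])))).resolve_left
        fun h => hn'.1 (h ▸ hx)
    rw [hlen] at hP
    by_cases hbl : b ∈ l2
    swap
    · left
      refine ⟨inw (l1 ++ l2), ⟨_, hl1, hn'.2, hP, rfl⟩, (inw_move l1 l2 ?_).symm⟩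
      intro x hx
      exact T.comm_a x (((T.mem1 x).1 (hl1 x (by simp [hx]))).resolve_left fun h => hbl (h ▸ hx))
    obtain ⟨m1, m2, rfl⟩ := List.append_of_mem hbl
    have hperm2 : (l1 ++ (m1 ++ b :: m2)).Perm (b :: ((l1 ++ m1) ++ m2)) := by
      rw [← List.append_assoc]; exact List.perm_middle
    have hn2 := List.nodup_cons.1 (hperm2.nodup_iff.1 hn'.2)
    have hlen2 : (l1 ++ (m1 ++ b :: m2)).length = ((l1 ++ m1) ++ m2).length + 1 := by
      simpa using hperm2.length_eq
    have hl2 : ∀ x ∈ (l1 ++ m1) ++ m2, x ∈ J2 := fun x hx =>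
      ((T.mem1 x).1 (hl1 x (hperm2.mem_iff.2 (List.mem_cons_of_mem _ hx)))).resolve_left
        fun h => hn2.1 (h ▸ hx)
    rw [hlen2] at hP
    -- The letters between `a` and `b` commute with `a` and can be moved in front of it.
    have e1 : inw (l1 ++ a :: (m1 ++ b :: m2)) = m2.foldl op (op (op (inw (l1 ++ m1)) a) b) := by
      have h1 : l1 ++ a :: (m1 ++ b :: m2) = (l1 ++ a :: m1) ++ b :: m2 := by simp
      rw [h1, inw_append, List.foldl_cons, inw_move l1 m1]
      exact fun x hx => T.comm_a x (hl2 x (by simp [hx]))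
    generalize l1 ++ m1 = q at *
    have hq2 : ∀ x ∈ q, x ∈ J2 := fun x hx => hl2 x (by simp [hx])
    have hm2 : ∀ x ∈ m2, x ∈ J2 := fun x hx => hl2 x (by simp [hx])
    -- If `c` precedes `a` and `b`, the letters of `m2` commute with both and move in front of them;
    -- otherwise `a` and `b` can be interchanged, and `a` moves to the end.
    by_cases hcq : c ∈ q
    · right
      have hm3 : ∀ x ∈ m2, x ∈ J3 := T.word_c hm2 fun h =>
        (List.nodup_append.1 hn2.2).2.2 c hcq c h rfl
      have hcb : ∀ x ∈ m2, Commute x b := fun x hx => T.comm_b x (hm3 x hx)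
      refine ⟨inw (q ++ m2), ⟨⟨_, hl2, hn2.2, hP, rfl⟩, fun h => ?_⟩, ?_⟩
      · exact T.not_mem_J3 hl2 hn2.2 (by simp [hcq]) (BSet_mem h)
      · rw [e1, foldl_op_comm m2 _ hcb, foldl_op_comm m2 _ fun x hx => T.comm_a x (hm2 x hx),
          ← inw_append, T.phi_eq (inw_mem hl2)]
    · left
      have hq3 := T.word_c hq2 hcq
      have hva := commute_closure T.comm_a (inw_mem hq2)
      have hvb := commute_closure T.comm_b (inw_mem hq3)
      -- With `v = inw q` commuting with `a` and `b`, both orders of `a`, `b` give `v a b a = v b a b`.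
      have e2 : op (op (inw q) a) b = op (op (inw q) b) a := by
        have h1 := T.phi_eq (inw_mem hq2)
        have h2 : op (inw q) b = inw q * b := op_of_commute T.bb hvb
        rw [h1, h2]
        have h3 : a * (inw q * b) * a = inw q * (a * b * a) := by
          calc a * (inw q * b) * a = (a * inw q) * b * a := by group
            _ = inw q * (a * b * a) := by rw [← hva.eq]; group
        have h4 : b * (inw q * a) * b = inw q * (b * a * b) := by
          calc b * (inw q * a) * b = (b * inw q) * a * b := by group
            _ = inw q * (b * a * b) := by rw [← hvb.eq]; group
        rcases op_cases (inw q * b) a with ⟨h, _⟩ | ⟨_, h⟩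
        · exfalso
          rw [h3] at h
          exact T.ab_ne ((conj_eq_iff T.aa).1 (mul_left_cancel h))
        · rw [h, h3, h4, T.braid_ab]
      refine ⟨inw (q ++ b :: m2), ⟨_, ?_, ?_, ?_, rfl⟩, ?_⟩
      · intro x hx
        rw [List.perm_middle.mem_iff, List.mem_cons] at hx
        exact (T.mem1 x).2 (hx.imp id fun h => hl2 x h)
      · rw [List.perm_middle.nodup_iff, List.nodup_cons]
        exact hn2
      · rw [List.perm_middle.length_eq, List.length_cons]
        exact hP
      · change op _ a = _
        rw [e1, e2, foldl_op_comm m2 _ fun x hx => T.comm_a x (hm2 x hx), inw_append,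
          List.foldl_cons]
  · rintro (h | ⟨_, ⟨l, hl, hn, hP, rfl⟩, rfl⟩ | ⟨_, ⟨⟨l, hl, hn, hP, rfl⟩, _⟩, rfl⟩)
    · exact BSet_mono T.sub1 P h
    · refine ⟨l ++ [a], ?_, nodup_snoc.2 ⟨hn, fun h => T.ha (hl a h)⟩, by simpa using hP,
        inw_snoc _ _⟩
      intro x hx
      rcases List.mem_append.mp hx with h | h
      · exact T.sub1 (hl x h)
      · rw [List.mem_singleton.mp h]; exact T.a_mem
    · have hal : a ∉ l := fun h => T.ha (T.sub2 (hl a h))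
      have hba : b ≠ a := fun h => T.ha (h ▸ T.b_mem)
      refine ⟨(l ++ [a]) ++ [b], ?_, ?_, by simpa using hP, ?_⟩
      · intro x hx
        simp only [List.mem_append, List.mem_singleton] at hx
        rcases hx with (h | rfl) | rfl
        · exact T.sub1 (T.sub2 (hl x h))
        · exact T.a_mem
        · exact T.sub1 T.b_mem
      · refine nodup_snoc.2 ⟨nodup_snoc.2 ⟨hn, hal⟩, fun h => ?_⟩
        rcases List.mem_append.mp h with h | h
        · exact T.hb (hl b h)
        · exact hba (List.mem_singleton.mp h)
      · rw [inw_snoc, inw_snoc, T.phi_eq (inw_mem hl)]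

/-- The recursion, for all conditions `P` on the rank at once. -/
theorem count (T : Tail J0 J1 J2 J3 a b c) (hfin : ∀ P, (BSet J0 P).Finite) (P : ℕ → Prop) :
    (BSet J0 P).ncard + (BSet J3 fun m => P (m + 2)).ncard =
      (BSet J1 P).ncard + (BSet J1 fun m => P (m + 1)).ncard +
        (BSet J2 fun m => P (m + 2)).ncard := by
  have hf1 : ∀ P, (BSet J1 P).Finite := fun P => (hfin P).subset (BSet_mono T.sub1 P)
  have hf2 : ∀ P, (BSet J2 P).Finite := fun P => (hf1 P).subset (BSet_mono T.sub2 P)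
  have hd1 : Disjoint (BSet J1 P) ((fun v => op v a) '' BSet J1 (fun m => P (m + 1)) ∪
      (fun u => b * (u * a) * b) ''
        (BSet J2 (fun m => P (m + 2)) \ BSet J3 (fun m => P (m + 2)))) := by
    rw [Set.disjoint_left]
    rintro w hw (⟨_, ⟨l, hl, _, _, rfl⟩, rfl⟩ | ⟨u, ⟨hu, _⟩, rfl⟩)
    · exact T.op_a_not_mem (inw_mem hl) (inw_isInv T.E fun x hx => T.sub1 (hl x hx)).2
        (BSet_mem hw)
    · exact T.phi_not_mem (BSet_mem hu) (BSet_mem hw)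
  have hd2 : Disjoint ((fun v => op v a) '' BSet J1 (fun m => P (m + 1)))
      ((fun u => b * (u * a) * b) ''
        (BSet J2 (fun m => P (m + 2)) \ BSet J3 (fun m => P (m + 2)))) := by
    rw [Set.disjoint_left]
    rintro _ ⟨v, hv, rfl⟩ ⟨_, ⟨⟨l, hl, hn, hP, rfl⟩, h3⟩, h⟩
    refine T.op_ne_phi (BSet_mem hv) hl hn ?_ h.symm
    by_contra hcl
    exact h3 ⟨l, T.word_c hl hcl, hn, hP, rfl⟩
  have hfi2 := (hf1 fun m => P (m + 1)).image fun v => op v a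
  have hfi3 := ((hf2 fun m => P (m + 2)).subset
    (Set.sdiff_subset (t := BSet J3 fun m => P (m + 2)))).image fun u => b * (u * a) * b
  have hi2 : Function.Injective fun v : G => op v a := fun x y h => by
    have := congrArg (fun z => op z a) h
    simpa only [op_op T.aa] using this
  have hi3 : Function.Injective fun u : G => b * (u * a) * b := fun x y h =>
    mul_right_cancel (mul_left_cancel (mul_right_cancel h))
  rw [T.decomp P, Set.ncard_union_eq hd1 (hf1 P) (hfi2.union hfi3),
    Set.ncard_union_eq hd2 hfi2 hfi3, Set.ncard_image_of_injective _ hi2,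
    Set.ncard_image_of_injective _ hi3]
  have := Set.ncard_sdiff_add_ncard_of_subset (BSet_mono T.sub3 fun m => P (m + 2))
    (hf2 fun m => P (m + 2))
  omega

end Tail

end Decomposition

/-! ### The recursion -/

section Recursion

variable {n : ℕ} {W : Type*} [Group W] {M : CoxeterMatrix (Fin n)} (cs : CoxeterSystem M W)

theorem hCount_eq (i : ℕ) : hCount (parabGen cs i) = (BSet (parabGen cs i) fun _ => True).ncard :=
    by
  unfold hCount
  congr 1
  ext w
  rw [Set.mem_ofPred_eq, boolean_iff (exchSys_parabGen cs i)]
  simp [BSet]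

theorem gCount_eq (i k : ℕ) :
    gCount (parabGen cs i) k = (BSet (parabGen cs i) fun m => m = k).ncard := by
  unfold gCount
  congr 1
  ext w
  have hiff := boolean_iff (exchSys_parabGen cs i) w
  constructor
  · rintro ⟨h1, h2, h3, h4⟩
    obtain ⟨l, hl, hn, rfl⟩ := hiff.1 ⟨h1, h2, h3⟩
    refine ⟨l, hl, hn, ?_, rfl⟩
    have := (rank_inw cs hl hn).2
    omega
  · rintro ⟨l, hl, hn, rfl, rfl⟩
    obtain ⟨h1, h2, h3⟩ := hiff.2 ⟨l, hl, hn, rfl⟩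
    refine ⟨h1, h2, h3, ?_⟩
    have := (rank_inw cs hl hn).2
    omega

theorem BSet_finite (i : ℕ) (P : ℕ → Prop) : (BSet (parabGen cs i) P).Finite := by
  refine (Set.finite_range fun ω : {ω : List (Fin n) // ω.Nodup} =>
    inw (ω.1.map cs.simple)).subset ?_
  rintro w ⟨l, hl, hn, _, rfl⟩
  obtain ⟨ω, _, rfl⟩ := exists_indices cs l hl
  exact ⟨⟨ω, hn.of_map _⟩, rfl⟩

theorem mem_parabGen_succ {i : ℕ} (hi : i < n) (x : W) :
    x ∈ parabGen cs (i + 1) ↔ x = cs.simple ⟨i, hi⟩ ∨ x ∈ parabGen cs i := by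
  constructor
  · rintro ⟨b, hb, rfl⟩
    rcases Nat.lt_succ_iff_lt_or_eq.1 hb with h | h
    · exact Or.inr ⟨b, h, rfl⟩
    · left; congr 1; exact Fin.ext h
  · rintro (rfl | ⟨b, hb, rfl⟩)
    · exact ⟨_, Nat.lt_succ_self i, rfl⟩
    · exact ⟨b, by omega, rfl⟩

theorem simple_not_mem {i : ℕ} (hi : i < n) : cs.simple ⟨i, hi⟩ ∉ parabGen cs i := by
  rintro ⟨b, hb, h⟩
  rw [← simple_injective cs h] at hb
  exact lt_irrefl _ hb

end Recursion

end BoolInv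

/-- Let `(W, S)` be a Coxeter system with `S = {s₁, …, sₙ}` (here `sⱼ` is
`cs.simple ⟨j-1⟩`), `n ≥ 3`, such that `sₙ` commutes with `sᵢ` for `i ≤ n-2`,
`s_{n-1}` commutes with `sᵢ` for `i ≤ n-3`, `sₙ s_{n-1} sₙ = s_{n-1} sₙ s_{n-1}`
and `s_{n-1} s_{n-2} s_{n-1} = s_{n-2} s_{n-1} s_{n-2}`.  Then for all `k ≥ 2`:
`g(Wₙ,k) = g(W_{n-1},k) + g(W_{n-1},k-1) + g(W_{n-2},k-2) - g(W_{n-3},k-2)`,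
and moreover `h(Wₙ) = 2 h(W_{n-1}) + h(W_{n-2}) - h(W_{n-3})`. -/
theorem gCount_hCount_recursion {n : ℕ} {W : Type*} [Group W] {M : CoxeterMatrix (Fin n)}
    (cs : CoxeterSystem M W) (hn : 3 ≤ n)
    (hcomm1 : ∀ b : Fin n, (b : ℕ) + 2 < n →
      cs.simple b * cs.simple ⟨n - 1, by omega⟩ = cs.simple ⟨n - 1, by omega⟩ * cs.simple b)
    (hcomm2 : ∀ b : Fin n, (b : ℕ) + 3 < n →
      cs.simple b * cs.simple ⟨n - 2, by omega⟩ = cs.simple ⟨n - 2, by omega⟩ * cs.simple b)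
    (hbraid1 : cs.simple ⟨n - 1, by omega⟩ * cs.simple ⟨n - 2, by omega⟩ *
        cs.simple ⟨n - 1, by omega⟩ =
      cs.simple ⟨n - 2, by omega⟩ * cs.simple ⟨n - 1, by omega⟩ * cs.simple ⟨n - 2, by omega⟩)
    (hbraid2 : cs.simple ⟨n - 2, by omega⟩ * cs.simple ⟨n - 3, by omega⟩ *
        cs.simple ⟨n - 2, by omega⟩ =
      cs.simple ⟨n - 3, by omega⟩ * cs.simple ⟨n - 2, by omega⟩ * cs.simple ⟨n - 3, by omega⟩) :
    (∀ k : ℕ, 2 ≤ k →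
      (gCount (parabGen cs n) k : ℤ) =
        gCount (parabGen cs (n - 1)) k + gCount (parabGen cs (n - 1)) (k - 1)
        + gCount (parabGen cs (n - 2)) (k - 2) - gCount (parabGen cs (n - 3)) (k - 2)) ∧
    (hCount (parabGen cs n) : ℤ) =
      2 * hCount (parabGen cs (n - 1)) + hCount (parabGen cs (n - 2))
      - hCount (parabGen cs (n - 3)) := by
  obtain ⟨m, rfl⟩ : ∃ m, n = m + 3 := ⟨n - 3, by omega⟩
  have T : BoolInv.Tail (parabGen cs (m + 3)) (parabGen cs (m + 2)) (parabGen cs (m + 1))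
      (parabGen cs m) (cs.simple ⟨m + 2, by omega⟩) (cs.simple ⟨m + 1, by omega⟩)
      (cs.simple ⟨m, by omega⟩) :=
    { E := BoolInv.exchSys_parabGen cs (m + 3)
      mem0 := BoolInv.mem_parabGen_succ cs (by omega)
      mem1 := BoolInv.mem_parabGen_succ cs (by omega)
      mem2 := BoolInv.mem_parabGen_succ cs (by omega)
      ha := BoolInv.simple_not_mem cs (by omega)
      hb := BoolInv.simple_not_mem cs (by omega)
      hc := BoolInv.simple_not_mem cs (by omega)
      comm_a := by
        rintro x ⟨d, hd, rfl⟩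
        exact hcomm1 d (by omega)
      comm_b := by
        rintro x ⟨d, hd, rfl⟩
        exact hcomm2 d (by omega)
      braid_ab := hbraid1
      braid_bc := hbraid2 }
  have hcount := T.count (BoolInv.BSet_finite cs (m + 3))
  refine ⟨fun k hk => ?_, ?_⟩
  · have h := hcount (fun r => r = k)
    have e1 : (fun r => r + 1 = k) = fun r => r = k - 1 := by
      funext r; exact propext (by omega)
    have e2 : (fun r => r + 2 = k) = fun r => r = k - 2 := by
      funext r; exact propext (by omega)
    rw [e1, e2] at h
    simp only [← BoolInv.gCount_eq] at h
    simp only [show m + 3 - 1 = m + 2 from rfl, show m + 3 - 2 = m + 1 from rfl,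
      show m + 3 - 3 = m from rfl]
    omega
  · have h := hcount (fun _ => True)
    simp only [← BoolInv.hCount_eq] at h
    simp only [show m + 3 - 1 = m + 2 from rfl, show m + 3 - 2 = m + 1 from rfl,
      show m + 3 - 3 = m from rfl]
    omega
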